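/- arXiv:0711.2223 — 2 statements merged into one kernel-verified Lean document; each statement's English description precedes it below -/
import Mathlib

section
/- If an involution w ∈ I(S_n) has a long-crossing pair, then w is not Boolean. -/
/-!
For `u ∈ Sₙ` let `R u p q` be the number of positions `k < p` with `q ≤ u k`. The argument rests on
the classical description of the Bruhat order by these numbers (`bruhatLE_iff`): `u ≤ w` iff
`R u p q ≤ R w p q` for all `p, q`. One direction holds because exchanging a non-inverted pair of
values decreases no `R u p q`; for the other, if `u ≠ w` then at the first position `a` where they
differ one exchanges `u a` with the first value to its right that lies in `(u a, w a]`, and the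
result still satisfies the rank inequalities against `w`. For involutions it suffices to compare at `p ≤ q`
(`bruhatLE_of_upper`), since `R u p q + q = p + R u q p`.

Let `(i, j)` be long-crossing in `w`, and on the positions `c = j - 1, j, j + 1, j + 2` consider the
involutions with one-line patterns
`x = 3214`, `y = 1432`, `u₁ = 4231`, `u₂ = 3412`.
The rank description gives `x, y ≤ u₁, u₂ ≤ w`. If `B(w)` were Boolean it would be a lattice, so the
join `z` of `x` and `y` would satisfy `x, y ≤ z ≤ u₁, u₂`. The bounds by `x` and `u₂` force
`z k = j + 1` for some `k < j`, those by `y` and `u₂` force `z j ≥ j + 2`, whereas `u₁` allows only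
one position `k ≤ j` with `z k ≥ j + 1`.
-/

/-- The number of inversions of a permutation. -/
def invCount {n : ℕ} (π : Equiv.Perm (Fin n)) : ℕ :=
  (Finset.univ.filter fun p : Fin n × Fin n => p.1 < p.2 ∧ π p.2 < π p.1).card

/-- `w` is an involution: an element of order at most two. -/
def IsInvolution {n : ℕ} (w : Equiv.Perm (Fin n)) : Prop := w * w = 1

/-- A transposition in the symmetric group. -/
def IsTransposition {n : ℕ} (t : Equiv.Perm (Fin n)) : Prop :=
  ∃ i j : Fin n, i ≠ j ∧ t = Equiv.swap i j

/-- The Bruhat order on the symmetric group: `u ≤ w` iff `w = u * t₁ * ⋯ * tₘ` for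
transpositions `t₁, …, tₘ` such that the number of inversions strictly increases
along the partial products `u * t₁ * ⋯ * tᵢ`. -/
def BruhatLE {n : ℕ} (u w : Equiv.Perm (Fin n)) : Prop :=
  ∃ ts : List (Equiv.Perm (Fin n)),
    (∀ t ∈ ts, IsTransposition t) ∧
    w = ts.foldl (· * ·) u ∧
    ∀ k, k + 1 ≤ ts.length →
      invCount ((ts.take k).foldl (· * ·) u) < invCount ((ts.take (k + 1)).foldl (· * ·) u)

/-- An involution `w` is Boolean if the principal order ideal
`B(w) = {u ∈ I(Sₙ) : u ≤ w}` of the Bruhat order on involutions is isomorphic,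
as a poset, to the Boolean lattice of all subsets of some finite set. -/
def IsBooleanInvolution {n : ℕ} (w : Equiv.Perm (Fin n)) : Prop :=
  ∃ (m : ℕ) (f : {u : Equiv.Perm (Fin n) // IsInvolution u ∧ BruhatLE u w} ≃ Finset (Fin m)),
    ∀ a b, BruhatLE a.1 b.1 ↔ f a ⊆ f b

/-- A pair of positions `(i, j)` is long-crossing in `w` if `i < j < w j` and
`w i > j + 1`. -/
def HasLongCrossing {n : ℕ} (w : Equiv.Perm (Fin n)) : Prop :=
  ∃ i j : Fin n, (i : ℕ) < (j : ℕ) ∧ (j : ℕ) < (w j : ℕ) ∧ (j : ℕ) + 1 < (w i : ℕ)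

/-! ### Exchanging two values -/

/-- Exchanging a non-inverted pair of values increases the number of inversions. The proof injects
the inversions `(p, q)` of `u` into those of `u * swap a b` by applying `swap a b` to both positions
when this keeps their order, and by leaving them alone otherwise; `(a, b)` is not in the image. -/
theorem invCount_lt_swap {n : ℕ} (u : Equiv.Perm (Fin n)) {a b : Fin n} (hab : a < b)
    (hu : u a < u b) : invCount u < invCount (u * Equiv.swap a b) := by
  unfold invCount
  set τ := Equiv.swap a b with hτ
  have ta : τ a = b := Equiv.swap_apply_left a b
  have tb : τ b = a := Equiv.swap_apply_right a b
  have tn : ∀ k, k ≠ a → k ≠ b → τ k = k := fun k h1 h2 => Equiv.swap_apply_of_ne_of_ne h1 h2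
  set T := Finset.univ.filter
    fun p : Fin n × Fin n => p.1 < p.2 ∧ (u * τ) p.2 < (u * τ) p.1 with hT
  have hmem : (a, b) ∈ T := by
    rw [hT, Finset.mem_filter]
    simp [hab, ta, tb, hu]
  have hcard : (T.erase (a, b)).card < T.card := Finset.card_erase_lt_of_mem hmem
  refine lt_of_le_of_lt ?_ hcard
  refine Finset.card_le_card_of_injOn
    (fun p => if τ p.1 < τ p.2 then (τ p.1, τ p.2) else p) ?_ ?_
  · rintro ⟨p, q⟩ hpq
    simp only [Finset.coe_filter, Finset.mem_univ, true_and, Set.mem_ofPred_eq] at hpq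
    obtain ⟨h1, h2⟩ := hpq
    have hpp : τ (τ p) = p := Equiv.swap_apply_self a b p
    have hqq : τ (τ q) = q := Equiv.swap_apply_self a b q
    rw [Finset.mem_coe, Finset.mem_erase, hT, Finset.mem_filter]
    simp only [Finset.mem_univ, true_and, Equiv.Perm.mul_apply]
    have cp : p = a ∨ p = b ∨ τ p = p := by
      by_cases h : p = a
      · exact Or.inl h
      · by_cases h' : p = b
        · exact Or.inr (Or.inl h')
        · exact Or.inr (Or.inr (tn p h h'))
    have cq : q = a ∨ q = b ∨ τ q = q := by
      by_cases h : q = a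
      · exact Or.inl h
      · by_cases h' : q = b
        · exact Or.inr (Or.inl h')
        · exact Or.inr (Or.inr (tn q h h'))
    split_ifs with h
    · grind
    · grind
  · rintro ⟨p, q⟩ hpq ⟨p', q'⟩ hpq' heq
    simp only [Finset.coe_filter, Finset.mem_univ, true_and, Set.mem_ofPred_eq] at hpq hpq'
    have hs : ∀ k, τ (τ k) = k := fun k => Equiv.swap_apply_self a b k
    have := hs p; have := hs q; have := hs p'; have := hs q'
    simp only at heq
    split_ifs at heq <;> simp only [Prod.mk.injEq] at heq ⊢ <;> grind

/-- The rank numbers of the Bruhat order: the number of positions `k < p` with `q ≤ u k`, where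
positions and values are read as natural numbers starting from `0`. -/
def R {n : ℕ} (u : Equiv.Perm (Fin n)) (p q : ℕ) : ℕ :=
  (Finset.univ.filter fun k : Fin n => (k : ℕ) < p ∧ q ≤ (u k : ℕ)).card

theorem R_split {n : ℕ} (u : Equiv.Perm (Fin n)) {a b : Fin n} (hab : a ≠ b) (p q : ℕ) :
    R u p q = (if (a : ℕ) < p ∧ q ≤ (u a : ℕ) then 1 else 0)
      + ((if (b : ℕ) < p ∧ q ≤ (u b : ℕ) then 1 else 0)
      + ∑ k ∈ (Finset.univ.erase a).erase b,
          if (k : ℕ) < p ∧ q ≤ (u k : ℕ) then 1 else 0) := by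
  unfold R
  rw [Finset.card_filter, ← Finset.add_sum_erase _ _ (Finset.mem_univ a),
    ← Finset.add_sum_erase (Finset.univ.erase a) _ (a := b) (by simp [hab.symm])]

/-- Effect on the rank numbers of exchanging a non-inverted pair of values. -/
theorem R_swap {n : ℕ} (u : Equiv.Perm (Fin n)) {a b : Fin n} (hab : a < b)
    (hu : u a < u b) (p q : ℕ) :
    R (u * Equiv.swap a b) p q = R u p q +
      if (a : ℕ) < p ∧ p ≤ (b : ℕ) ∧ (u a : ℕ) < q ∧ q ≤ (u b : ℕ) then 1 else 0 := by
  rw [R_split u hab.ne, R_split (u * Equiv.swap a b) hab.ne]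
  have hsum : (∑ k ∈ (Finset.univ.erase a).erase b,
      if (k : ℕ) < p ∧ q ≤ ((u * Equiv.swap a b) k : ℕ) then 1 else 0)
      = ∑ k ∈ (Finset.univ.erase a).erase b,
        if (k : ℕ) < p ∧ q ≤ (u k : ℕ) then 1 else 0 := by
    refine Finset.sum_congr rfl fun k hk => ?_
    simp only [Finset.mem_erase, Finset.mem_univ, and_true] at hk
    rw [Equiv.Perm.mul_apply, Equiv.swap_apply_of_ne_of_ne hk.2 hk.1]
  rw [hsum]
  simp only [Equiv.Perm.mul_apply, Equiv.swap_apply_left, Equiv.swap_apply_right]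
  have h1 : (a : ℕ) < b := hab
  have h2 : (u a : ℕ) < u b := hu
  split_ifs <;> omega

/-! ### The rank description of the Bruhat order -/

theorem R_le_of_step {n : ℕ} (u t : Equiv.Perm (Fin n)) (ht : IsTransposition t)
    (hinv : invCount u < invCount (u * t)) (p q : ℕ) : R u p q ≤ R (u * t) p q := by
  obtain ⟨i, j, hij, rfl⟩ := ht
  wlog hlt : i < j generalizing i j
  · rw [Equiv.swap_comm] at hinv ⊢
    exact this j i hij.symm hinv (lt_of_le_of_ne (not_lt.mp hlt) hij.symm)
  rcases lt_or_gt_of_ne (fun h => hij (u.injective h) : u i ≠ u j) with h | h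
  · rw [R_swap u hlt h]
    exact Nat.le_add_right _ _
  · have := invCount_lt_swap (u * Equiv.swap i j) hlt (by simpa using h)
    rw [mul_assoc, Equiv.swap_mul_self, mul_one] at this
    omega

theorem R_le_of_bruhatLE {n : ℕ} {u w : Equiv.Perm (Fin n)} (h : BruhatLE u w) (p q : ℕ) :
    R u p q ≤ R w p q := by
  obtain ⟨ts, ht, rfl, hk⟩ := h
  induction ts generalizing u with
  | nil => simp
  | cons t ts ih =>
    have h0 := hk 0 (by simp)
    simp only [List.take_zero, List.foldl_nil, zero_add, List.take_succ_cons,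
      List.foldl_cons] at h0
    refine (R_le_of_step u t (ht t (by simp)) h0 p q).trans ?_
    refine ih (fun s hs => ht s (by simp [hs])) fun k hkl => ?_
    have := hk (k + 1) (by simpa using hkl)
    simpa using this

theorem bruhatLE_cons {n : ℕ} {u t w : Equiv.Perm (Fin n)} (ht : IsTransposition t)
    (hinv : invCount u < invCount (u * t)) (h : BruhatLE (u * t) w) : BruhatLE u w := by
  obtain ⟨ts, hts, hw, hk⟩ := h
  refine ⟨t :: ts, ?_, by simpa using hw, ?_⟩
  · intro s hs
    rcases List.mem_cons.mp hs with rfl | hs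
    · exact ht
    · exact hts s hs
  · intro k hkl
    cases k with
    | zero => simpa using hinv
    | succ k => simpa using hk k (by simpa using hkl)

/-- If `u ≠ w` satisfies the rank inequalities against `w`, then some inversion-increasing exchange
of two values of `u` preserves them. -/
theorem exists_step {n : ℕ} {u w : Equiv.Perm (Fin n)} (hne : u ≠ w)
    (h : ∀ p q, R u p q ≤ R w p q) :
    ∃ a b : Fin n, a < b ∧ u a < u b ∧ ∀ p q, R (u * Equiv.swap a b) p q ≤ R w p q := by
  obtain ⟨a, hane, hamin⟩ : ∃ a, u a ≠ w a ∧ ∀ k < a, u k = w k := by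
    have hex : ∃ a, u a ≠ w a := by
      by_contra! hcon
      exact hne (Equiv.ext hcon)
    obtain ⟨a, ha, hmin⟩ := WellFounded.has_min (wellFounded_lt (α := Fin n))
      {a | u a ≠ w a} hex
    exact ⟨a, ha, fun k hk => by_contra fun hc => hmin k hc hk⟩
  have halt : u a < w a := by
    by_contra hcon
    have hlt : w a < u a := lt_of_le_of_ne (not_lt.mp hcon) hane.symm
    refine absurd (h (a + 1) (u a)) (not_le.mpr ?_)
    refine Finset.card_lt_card ?_
    rw [Finset.ssubset_iff_of_subset]
    · exact ⟨a, by simp, by simpa using hlt⟩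
    · intro k hk
      simp only [Finset.mem_filter, Finset.mem_univ, true_and] at hk ⊢
      have : k ≠ a := by
        rintro rfl
        exact absurd hk.2 (not_le.mpr hlt)
      have hka : k < a := by grind
      rw [hamin k hka]
      exact hk
  obtain ⟨b, ⟨hab, hub, hbw⟩, hbmin⟩ : ∃ b, (a < b ∧ u a < u b ∧ u b ≤ w a) ∧
      ∀ k, a < k → k < b → ¬ (u a < u k ∧ u k ≤ w a) := by
    have hex : ∃ b, a < b ∧ u a < u b ∧ u b ≤ w a := by
      refine ⟨u.symm (w a), ?_, by simpa using halt, by simp⟩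
      by_contra hcon
      rcases lt_or_eq_of_le (not_lt.mp hcon) with h1 | h1
      · have := hamin _ h1
        rw [Equiv.apply_symm_apply] at this
        exact absurd (w.injective this) h1.ne'
      · exact hane (by rw [← Equiv.apply_symm_apply u (w a), h1])
    obtain ⟨b, hb, hmin⟩ := WellFounded.has_min (wellFounded_lt (α := Fin n))
      {b | a < b ∧ u a < u b ∧ u b ≤ w a} hex
    exact ⟨b, hb, fun k h1 h2 hc => hmin k ⟨h1, hc⟩ h2⟩
  refine ⟨a, b, hab, hub, fun p q => ?_⟩
  rw [R_swap u hab hub]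
  split_ifs with hpq
  swap
  · simpa using h p q
  obtain ⟨hap, hpb, hq1, hq2⟩ := hpq
  -- Split both counts at the value `w a`: the parts above it compare by hypothesis, and the parts
  -- in `[q, w a]` differ because `u` attains no such value at positions in `[a, p)`.
  have hsplit : ∀ v : Equiv.Perm (Fin n), R v p q = R v p (w a + 1) +
      (Finset.univ.filter fun k : Fin n =>
        (k : ℕ) < p ∧ q ≤ (v k : ℕ) ∧ (v k : ℕ) ≤ w a).card := by
    intro v
    unfold R
    rw [← Finset.card_union_of_disjoint]
    · congr 1
      ext k
      simp only [Finset.mem_filter, Finset.mem_univ, true_and, Finset.mem_union]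
      have : (u b : ℕ) ≤ w a := hbw
      omega
    · rw [Finset.disjoint_filter]
      intro k _ h1 h2
      omega
  rw [hsplit u, hsplit w]
  have hlow : (Finset.univ.filter fun k : Fin n =>
        (k : ℕ) < p ∧ q ≤ (u k : ℕ) ∧ (u k : ℕ) ≤ w a).card <
      (Finset.univ.filter fun k : Fin n =>
        (k : ℕ) < p ∧ q ≤ (w k : ℕ) ∧ (w k : ℕ) ≤ w a).card := by
    have hbw' : (u b : ℕ) ≤ w a := hbw
    refine Finset.card_lt_card ?_
    rw [Finset.ssubset_iff_of_subset]
    · refine ⟨a, ?_, ?_⟩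
      · simp only [Finset.mem_filter, Finset.mem_univ, true_and]
        omega
      · simp only [Finset.mem_filter, Finset.mem_univ, true_and]
        omega
    · intro k hk
      simp only [Finset.mem_filter, Finset.mem_univ, true_and] at hk ⊢
      rcases lt_trichotomy k a with hka | rfl | hka
      · rw [← hamin k hka]
        exact hk
      · omega
      · exfalso
        refine hbmin k hka ?_ ⟨?_, ?_⟩
        · rw [Fin.lt_def]; omega
        · rw [Fin.lt_def]; omega
        · rw [Fin.le_def]; omega
  have := h p (w a + 1)
  omega

theorem invCount_le {n : ℕ} (u : Equiv.Perm (Fin n)) : invCount u ≤ n * n := by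
  unfold invCount
  exact (Finset.card_le_univ _).trans (by simp)

theorem bruhatLE_iff {n : ℕ} {u w : Equiv.Perm (Fin n)} :
    BruhatLE u w ↔ ∀ p q, R u p q ≤ R w p q := by
  refine ⟨fun h => R_le_of_bruhatLE h, fun h => ?_⟩
  induction hN : n * n - invCount u using Nat.strong_induction_on generalizing u with
  | _ N ih =>
    by_cases hne : u = w
    · subst hne
      exact ⟨[], by simp, by simp, by simp⟩
    · obtain ⟨a, b, hab, hub, hR⟩ := exists_step hne h
      have hinv := invCount_lt_swap u hab hub
      have := invCount_le (u * Equiv.swap a b)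
      exact bruhatLE_cons ⟨a, b, hab.ne, rfl⟩ hinv (ih _ (by omega) hR rfl)

/-! ### Rank numbers of involutions -/

/-- For `p ≤ n`, `p - R u p q` is the number of `k < p` with `u k < q`, which for an involution is symmetric in
`p` and `q`. -/
theorem R_symm {n : ℕ} {u : Equiv.Perm (Fin n)} (hu : IsInvolution u) {p q : ℕ}
    (hp : p ≤ n) (hq : q ≤ n) : R u p q + q = p + R u q p := by
  have huu : ∀ k, u (u k) = k := fun k => by
    rw [← Equiv.Perm.mul_apply, hu, Equiv.Perm.one_apply]
  have key : ∀ p q : ℕ, p ≤ n →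
      R u p q + (Finset.univ.filter fun k : Fin n => (k : ℕ) < p ∧ (u k : ℕ) < q).card = p := by
    intro p q hp
    unfold R
    rw [← Finset.card_union_of_disjoint]
    · have : (Finset.univ.filter fun k : Fin n => (k : ℕ) < p).card = p := by
        rw [Fin.card_filter_val_lt]
        omega
      conv_rhs => rw [← this]
      congr 1
      ext k
      simp only [Finset.mem_filter, Finset.mem_univ, true_and, Finset.mem_union]
      omega
    · rw [Finset.disjoint_filter]
      intro k _ h1 h2
      omega
  have hsym : (Finset.univ.filter fun k : Fin n => (k : ℕ) < p ∧ (u k : ℕ) < q).card =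
      (Finset.univ.filter fun k : Fin n => (k : ℕ) < q ∧ (u k : ℕ) < p).card := by
    refine Finset.card_bij (fun k _ => u k) ?_ (fun _ _ _ _ h => u.injective h) ?_
    · intro k hk
      simp only [Finset.mem_filter, Finset.mem_univ, true_and, huu] at hk ⊢
      exact hk.symm
    · intro k hk
      refine ⟨u k, ?_, huu k⟩
      simp only [Finset.mem_filter, Finset.mem_univ, true_and, huu] at hk ⊢
      exact hk.symm
  have h1 := key p q hp
  have h2 := key q p hq
  omega

theorem bruhatLE_of_upper {n : ℕ} {u w : Equiv.Perm (Fin n)} (hu : IsInvolution u)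
    (hw : IsInvolution w) (h : ∀ p q, p ≤ q → R u p q ≤ R w p q) : BruhatLE u w := by
  have hle : ∀ p q, p ≤ n → R u p q ≤ R w p q := by
    intro p q hp
    rcases le_total p q with hpq | hpq
    · exact h p q hpq
    · have h1 := R_symm hu hp (hpq.trans hp)
      have h2 := R_symm hw hp (hpq.trans hp)
      have h3 := h q p hpq
      omega
  refine bruhatLE_iff.mpr fun p q => ?_
  rcases le_total p n with hp | hp
  · exact hle p q hp
  · have hpn : ∀ v : Equiv.Perm (Fin n), R v p q = R v n q := by
      intro v
      unfold R
      congr 1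
      ext k
      have := k.isLt
      simp only [Finset.mem_filter, Finset.mem_univ, true_and]
      omega
    rw [hpn, hpn]
    exact hle n q le_rfl

theorem R_pos {n : ℕ} {u : Equiv.Perm (Fin n)} {p q : ℕ} (k : Fin n) (h1 : (k : ℕ) < p)
    (h2 : q ≤ (u k : ℕ)) : 1 ≤ R u p q :=
  Finset.card_pos.mpr ⟨k, by simp [h1, h2]⟩

theorem two_le_R {n : ℕ} {u : Equiv.Perm (Fin n)} {p q : ℕ} {k l : Fin n} (hkl : k ≠ l)
    (h1 : (k : ℕ) < p) (h2 : q ≤ (u k : ℕ)) (h3 : (l : ℕ) < p) (h4 : q ≤ (u l : ℕ)) :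
    2 ≤ R u p q := by
  rw [← Finset.card_pair hkl]
  refine Finset.card_le_card fun m hm => ?_
  rcases Finset.mem_insert.mp hm with rfl | hm
  · simp [h1, h2]
  · rw [Finset.mem_singleton.mp hm]
    simp [h3, h4]

theorem exists_of_R_pos {n : ℕ} {u : Equiv.Perm (Fin n)} {p q : ℕ} (h : 1 ≤ R u p q) :
    ∃ k : Fin n, (k : ℕ) < p ∧ q ≤ (u k : ℕ) := by
  obtain ⟨k, hk⟩ := Finset.card_pos.mp h
  exact ⟨k, by simpa using hk⟩

theorem isInvolution_swap {n : ℕ} (a b : Fin n) : IsInvolution (Equiv.swap a b) :=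
  Equiv.swap_mul_self a b

/-- Above the diagonal, the rank numbers of a transposition are the indicator function of a
rectangle. -/
theorem R_swap_upper {n : ℕ} {a b : Fin n} (hab : a < b) {p q : ℕ} (hpq : p ≤ q) :
    R (Equiv.swap a b) p q = if (a : ℕ) < p ∧ q ≤ (b : ℕ) then 1 else 0 := by
  have h1 : R (1 : Equiv.Perm (Fin n)) p q = 0 := by
    unfold R
    rw [Finset.card_eq_zero, Finset.filter_eq_empty_iff]
    intro k _ hk
    rw [Equiv.Perm.one_apply] at hk
    omega
  have := R_swap (1 : Equiv.Perm (Fin n)) hab hab p q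
  rw [one_mul, h1, zero_add] at this
  rw [this]
  have hab' : (a : ℕ) < b := hab
  refine if_congr ?_ rfl rfl
  simp only [Equiv.Perm.one_apply]
  omega

/-! ### The four involutions below `w` -/

/-- If an involution `w ∈ I(Sₙ)` has a long-crossing pair, then `w` is not Boolean. -/
theorem not_boolean_of_long_crossing {n : ℕ} (w : Equiv.Perm (Fin n))
    (hw : IsInvolution w) (h : HasLongCrossing w) :
    ¬ IsBooleanInvolution w := by
  rintro ⟨m, f, hf⟩
  obtain ⟨i, j, hij, hj, hi⟩ := h
  have hlt := (w i).isLt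
  obtain ⟨c, hc⟩ : ∃ c : Fin n, (c : ℕ) + 1 = j := ⟨⟨j - 1, by omega⟩, by simp; omega⟩
  obtain ⟨d, hd⟩ : ∃ d : Fin n, (d : ℕ) = j + 1 := ⟨⟨j + 1, by omega⟩, rfl⟩
  obtain ⟨e, he⟩ : ∃ e : Fin n, (e : ℕ) = j + 2 := ⟨⟨j + 2, by omega⟩, rfl⟩
  have hij' : i ≠ j := fun h => by simp [h] at hij
  have hcd : c < d := by rw [Fin.lt_def]; omega
  have hje : j < e := by rw [Fin.lt_def]; omega
  have hce : c < e := by rw [Fin.lt_def]; omega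
  have hcj : c ≠ j := fun h => by rw [h] at hc; omega
  have hcne : c ≠ e := hce.ne
  have hdj : d ≠ j := fun h => by rw [h] at hd; omega
  have hde : d ≠ e := fun h => by rw [h] at hd; omega
  set x := Equiv.swap c d with hx
  set y := Equiv.swap j e with hy
  set u₁ := Equiv.swap c e with hu₁
  set u₂ := x * y with hu₂
  have xj : x j = j := Equiv.swap_apply_of_ne_of_ne hcj.symm hdj.symm
  have xe : x e = e := Equiv.swap_apply_of_ne_of_ne hcne.symm hde.symm
  have ix : IsInvolution x := isInvolution_swap _ _
  have iy : IsInvolution y := isInvolution_swap _ _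
  have iu₁ : IsInvolution u₁ := isInvolution_swap _ _
  have iu₂ : IsInvolution u₂ := by
    have hcomm : x * y = y * x := by
      ext k
      simp only [hx, hy, Equiv.Perm.mul_apply, Equiv.swap_apply_def]
      grind
    have ix' : x * x = 1 := ix
    have iy' : y * y = 1 := iy
    change x * y * (x * y) = 1
    calc x * y * (x * y) = x * (y * x) * y := by simp only [mul_assoc]
      _ = (x * x) * (y * y) := by rw [← hcomm]; simp only [mul_assoc]
      _ = 1 := by rw [ix', iy', one_mul]
  have rx : ∀ p q, p ≤ q → R x p q = if (c : ℕ) < p ∧ q ≤ (d : ℕ) then 1 else 0 :=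
    fun p q hpq => R_swap_upper hcd hpq
  have ry : ∀ p q, p ≤ q → R y p q = if (j : ℕ) < p ∧ q ≤ (e : ℕ) then 1 else 0 :=
    fun p q hpq => R_swap_upper hje hpq
  have ru₁ : ∀ p q, p ≤ q → R u₁ p q = if (c : ℕ) < p ∧ q ≤ (e : ℕ) then 1 else 0 :=
    fun p q hpq => R_swap_upper hce hpq
  have ru₂ : ∀ p q, p ≤ q → R u₂ p q = (if (c : ℕ) < p ∧ q ≤ (d : ℕ) then 1 else 0) +
      if (j : ℕ) < p ∧ q ≤ (e : ℕ) then 1 else 0 := by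
    intro p q hpq
    rw [hu₂, hy, R_swap x hje (by rw [xj, xe]; exact hje), rx p q hpq, xj, xe]
    congr 1
    split_ifs <;> omega
  have hu₁w : BruhatLE u₁ w := by
    refine bruhatLE_of_upper iu₁ hw fun p q hpq => ?_
    rw [ru₁ p q hpq]
    split_ifs with hc'
    · exact R_pos i (by omega) (by omega)
    · exact Nat.zero_le _
  have hu₂w : BruhatLE u₂ w := by
    refine bruhatLE_of_upper iu₂ hw fun p q hpq => ?_
    rw [ru₂ p q hpq]
    split_ifs with h1 h2 h2
    · exact two_le_R hij' (by omega) (by omega) (by omega) (by omega)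
    · exact R_pos i (by omega) (by omega)
    · exact R_pos i (by omega) (by omega)
    · exact Nat.zero_le _
  have hxu₁ : BruhatLE x u₁ := bruhatLE_of_upper ix iu₁ fun p q hpq => by
    rw [rx p q hpq, ru₁ p q hpq]; split_ifs <;> omega
  have hyu₁ : BruhatLE y u₁ := bruhatLE_of_upper iy iu₁ fun p q hpq => by
    rw [ry p q hpq, ru₁ p q hpq]; split_ifs <;> omega
  have hxu₂ : BruhatLE x u₂ := bruhatLE_of_upper ix iu₂ fun p q hpq => by
    rw [rx p q hpq, ru₂ p q hpq]; exact Nat.le_add_right _ _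
  have hyu₂ : BruhatLE y u₂ := bruhatLE_of_upper iy iu₂ fun p q hpq => by
    rw [ry p q hpq, ru₂ p q hpq]; exact Nat.le_add_left _ _
  have trans_w : ∀ v, BruhatLE v u₁ → BruhatLE v w := fun v hv =>
    bruhatLE_iff.mpr fun p q => (R_le_of_bruhatLE hv p q).trans (R_le_of_bruhatLE hu₁w p q)
  let X : {u : Equiv.Perm (Fin n) // IsInvolution u ∧ BruhatLE u w} := ⟨x, ix, trans_w x hxu₁⟩
  let Y : {u : Equiv.Perm (Fin n) // IsInvolution u ∧ BruhatLE u w} := ⟨y, iy, trans_w y hyu₁⟩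
  let U₁ : {u : Equiv.Perm (Fin n) // IsInvolution u ∧ BruhatLE u w} := ⟨u₁, iu₁, hu₁w⟩
  let U₂ : {u : Equiv.Perm (Fin n) // IsInvolution u ∧ BruhatLE u w} := ⟨u₂, iu₂, hu₂w⟩
  -- `z` is the join of `x` and `y` in the alleged Boolean lattice.
  obtain ⟨z, hz⟩ : ∃ z, f z = f X ∪ f Y := ⟨f.symm (f X ∪ f Y), by simp⟩
  have hXz : BruhatLE x z.1 := (hf X z).mpr (by rw [hz]; exact Finset.subset_union_left)
  have hYz : BruhatLE y z.1 := (hf Y z).mpr (by rw [hz]; exact Finset.subset_union_right)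
  have hzU₁ : BruhatLE z.1 u₁ := (hf z U₁).mpr (by
    rw [hz]; exact Finset.union_subset ((hf X U₁).mp hxu₁) ((hf Y U₁).mp hyu₁))
  have hzU₂ : BruhatLE z.1 u₂ := (hf z U₂).mpr (by
    rw [hz]; exact Finset.union_subset ((hf X U₂).mp hxu₂) ((hf Y U₂).mp hyu₂))
  obtain ⟨k, hk1, hk2⟩ : ∃ k : Fin n, (k : ℕ) < j ∧ (j : ℕ) + 1 ≤ (z.1 k : ℕ) := by
    refine exists_of_R_pos (le_trans ?_ (R_le_of_bruhatLE hXz _ _))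
    rw [rx _ _ (by omega), if_pos (by omega)]
  obtain ⟨l, hl1, hl2⟩ : ∃ l : Fin n, (l : ℕ) < j + 1 ∧ (j : ℕ) + 2 ≤ (z.1 l : ℕ) := by
    refine exists_of_R_pos (le_trans ?_ (R_le_of_bruhatLE hYz _ _))
    rw [ry _ _ (by omega), if_pos (by omega)]
  have hzero : R z.1 j (j + 2) ≤ 0 := by
    refine (R_le_of_bruhatLE hzU₂ _ _).trans ?_
    rw [ru₂ _ _ (by omega), if_neg (by omega), if_neg (by omega)]
  have hone : R z.1 (j + 1) (j + 1) ≤ 1 := by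
    refine (R_le_of_bruhatLE hzU₁ _ _).trans ?_
    rw [ru₁ _ _ le_rfl]
    split_ifs <;> omega
  have hkl : k ≠ l := by
    rintro rfl
    have := R_pos (u := z.1) (q := j + 2) k hk1 hl2
    omega
  have := two_le_R (u := z.1) (p := j + 1) (q := j + 1) hkl (by omega) hk2 hl1 (by omega)
  omega
end

section
/- An involution w ∈ I(S^B_n) is Boolean (with respect to the Coxeter system of S^B_n) if and only if its image φ(w) ∈ I(S([±n])) is Boolean (with respect to the Coxeter system of S([±n])). -/
/-!
Both Coxeter systems are handled by one abstract theory of inversions. A predicate `η g r` (meaning that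
`g` makes the positive root of the reflection `r` negative) satisfying the recursion of `RefSys` along
generators gives the exchange property, hence the comparison of `glen g` with `glen (g * r)`, the
lifting property, and the fact that a generator `s` is below `u` in the Bruhat order iff `s` occurs
in `u`, tested by a subgroup that contains all the other generators (`RefSys.le_iff_notMem`). For
the permutations of `ℤ` generated by `GenA n` or `GenB n`, `η g r` says that `g` reverses the order
of a pair exchanged by `r` (`inverts`, `PermSys.refSys`), and the subgroups are the stabilizers of
the initial segments `{x | x ≤ k}`.

For involutions, `w ↦ uAct w t` removes a descent `t`, and lifting holds with `uAct` in place of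
multiplication. A Boolean ideal is described by its atoms, which are the generators below `w`
(`RefSys.suppBoolean_iff`), and this yields the recursion `RefSys.genBoolean_iff_uAct`: if `t` is a
descent of `w`, then `w` is Boolean iff `uAct w t` is Boolean and not above `t`. In other words, an
involution is Boolean iff no generator is repeated in its reduced words for `uAct`.

The theorem follows by induction on the signed length of `w`, removing a descent `sB i`. For `i = 0`
it is also a generator of `S([±n])`, and the two recursions agree. For `i ≥ 1`, both `sPos i` and
`sNeg i` are descents of `w` in `S([±n])`, and `uAct w (sB i)` arises by removing them one after the
other, or by removing `sPos i` alone when `w` conjugates one into the other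
(`RefSys.genBoolean_iff_pair`). A signed permutation lies above `sPos i` iff it lies above `sNeg i`,
iff it lies above `sB i` in the signed group: each says that the permutation does not preserve
`{x | x ≤ i}`. So the two recursions agree again.
-/

open scoped Classical

/-- The transposition `sᵢ = (i, i+1)` of the symmetric group on `[±n] ⊆ ℤ`. -/
def sPos (i : ℕ) : Equiv.Perm ℤ := Equiv.swap (i : ℤ) ((i : ℤ) + 1)

/-- The transposition `sᵢ' = (-i, -i-1)` of the symmetric group on `[±n] ⊆ ℤ`. -/
def sNeg (i : ℕ) : Equiv.Perm ℤ := Equiv.swap (-(i : ℤ)) (-(i : ℤ) - 1)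

/-- The transposition `s₀ = (1, -1)`. -/
def s0 : Equiv.Perm ℤ := Equiv.swap 1 (-1)

/-- The Coxeter generator `sᴮᵢ` of the group of signed permutations:
`sᴮ₀ = s₀` and `sᴮᵢ = sᵢ sᵢ'` for `i ≥ 1`. -/
def sB (i : ℕ) : Equiv.Perm ℤ := if i = 0 then s0 else sPos i * sNeg i

/-- The right action of the symbol `t̲` (for an involutive generator `t`) on a group:
`w · t̲ = w t` if `t w t = w`, and `w · t̲ = t w t` otherwise. -/
noncomputable def uAct {G : Type*} [Group G] (w t : G) : G :=
  if t * w * t = w then w * t else t * w * t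

/-- The length of `g` with respect to a generating set `Gen`:
the minimal length of a word in elements of `Gen` whose product is `g`. -/
noncomputable def glen {G : Type*} [Group G] (Gen : Set G) (g : G) : ℕ :=
  sInf {k : ℕ | ∃ l : List G, (∀ t ∈ l, t ∈ Gen) ∧ l.length = k ∧ l.prod = g}

/-- `t` is a reflection with respect to the generating set `Gen`:
a conjugate `x s x⁻¹` of a generator `s ∈ Gen` by an element `x` of the group
generated by `Gen`. -/
def IsGenReflection {G : Type*} [Group G] (Gen : Set G) (t : G) : Prop :=
  ∃ x ∈ Subgroup.closure Gen, ∃ s ∈ Gen, t = x * s * x⁻¹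

/-- The Bruhat order with respect to the generating set `Gen`: `u ≤ w` iff
`w = u t₁ ⋯ tₘ` for reflections `t₁, …, tₘ` such that the length strictly
increases along the partial products `u t₁ ⋯ tᵢ`. -/
def genBruhatLE {G : Type*} [Group G] (Gen : Set G) (u w : G) : Prop :=
  ∃ ts : List G, (∀ t ∈ ts, IsGenReflection Gen t) ∧
    w = ts.foldl (· * ·) u ∧
    ∀ k, k + 1 ≤ ts.length →
      glen Gen ((ts.take k).foldl (· * ·) u) < glen Gen ((ts.take (k + 1)).foldl (· * ·) u)

/-- An involution `w` of the group generated by `Gen` is Boolean if the principal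
order ideal of `w` in the Bruhat order on involutions is isomorphic, as a poset,
to the Boolean lattice of all subsets of some finite set. -/
def genBoolean {G : Type*} [Group G] (Gen : Set G) (w : G) : Prop :=
  ∃ (m : ℕ)
    (f : {u : G // u ∈ Subgroup.closure Gen ∧ u * u = 1 ∧ genBruhatLE Gen u w} ≃ Finset (Fin m)),
    ∀ a b, genBruhatLE Gen a.1 b.1 ↔ f a ⊆ f b

/-- The Coxeter generating set `{sᴮ₀, …, sᴮ_{n-1}}` of the group `S^B_n` of signed
permutations of `[±n]`. -/
def GenB (n : ℕ) : Set (Equiv.Perm ℤ) := {g | ∃ i : ℕ, i + 1 ≤ n ∧ g = sB i}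

/-- The Coxeter generating set `{s_{n-1}', …, s₁', s₀, s₁, …, s_{n-1}}` of the
symmetric group `S([±n])`. -/
def GenA (n : ℕ) : Set (Equiv.Perm ℤ) :=
  {g | g = s0 ∨ ∃ i : ℕ, 1 ≤ i ∧ i + 1 ≤ n ∧ (g = sPos i ∨ g = sNeg i)}

/-! ### Inversion functions, exchange and lifting -/

/-- Characteristic properties of an inversion function `η` on the group generated by `Gen`. For a
Coxeter system, `η g r` says that the positive root of the reflection `r` is sent by `g` to a
negative root; the recursion `step` expresses that a simple reflection only changes the sign of its
own root. -/
structure RefSys {G : Type*} [Group G] (Gen : Set G) (η : G → G → Prop) : Prop where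
  sq : ∀ s ∈ Gen, s * s = 1
  one : ∀ r, IsGenReflection Gen r → ¬ η 1 r
  step : ∀ s ∈ Gen, ∀ g ∈ Subgroup.closure Gen, ∀ r, IsGenReflection Gen r →
    (η (s * g) r ↔ ¬ (η g r ↔ g * r * g⁻¹ = s))

/-- One step of the Bruhat order: right multiplication by a reflection that increases the
length. -/
def BStep {G : Type*} [Group G] (Gen : Set G) (x y : G) : Prop :=
  ∃ r, IsGenReflection Gen r ∧ y = x * r ∧ glen Gen x < glen Gen y

section Generic

variable {G : Type*} [Group G] {Gen : Set G} {η : G → G → Prop}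

theorem genBruhatLE_iff (u w : G) :
    genBruhatLE Gen u w ↔ Relation.ReflTransGen (BStep Gen) u w := by
  constructor
  · rintro ⟨ts, hts, rfl, hl⟩
    induction ts generalizing u with
    | nil => exact Relation.ReflTransGen.refl
    | cons t ts ih =>
      have h0 := hl 0 (by simp)
      simp only [List.take_zero, List.foldl_nil, zero_add, List.take_succ_cons,
        List.foldl_cons] at h0
      refine Relation.ReflTransGen.head ⟨t, hts t (by simp), rfl, h0⟩ ?_
      refine ih (u * t) (fun t' ht' => hts t' (by simp [ht'])) ?_
      intro k hk
      have := hl (k + 1) (by simpa using hk)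
      simpa using this
  · intro h
    induction h using Relation.ReflTransGen.head_induction_on with
    | refl => exact ⟨[], by simp, by simp, by simp⟩
    | head h1 _ ih =>
      obtain ⟨r, hr, rfl, hlt⟩ := h1
      obtain ⟨ts, hts, hw, hl⟩ := ih
      refine ⟨r :: ts, ?_, by simpa using hw, ?_⟩
      · intro t ht
        rcases List.mem_cons.1 ht with rfl | ht
        · exact hr
        · exact hts t ht
      · intro k hk
        cases k with
        | zero => simpa using hlt
        | succ k => simpa using hl k (by simpa using hk)

theorem ble_refl (u : G) : genBruhatLE Gen u u :=
  (genBruhatLE_iff u u).2 .refl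

theorem ble_trans {u v w : G} (h1 : genBruhatLE Gen u v) (h2 : genBruhatLE Gen v w) :
    genBruhatLE Gen u w := by
  rw [genBruhatLE_iff] at *
  exact h1.trans h2

theorem BStep.le {u v : G} (h : BStep Gen u v) : genBruhatLE Gen u v :=
  (genBruhatLE_iff u v).2 (.single h)

theorem ble_eq_or_lt {u w : G} (h : genBruhatLE Gen u w) :
    u = w ∨ glen Gen u < glen Gen w := by
  rw [genBruhatLE_iff] at h
  induction h with
  | refl => exact Or.inl rfl
  | tail _ h2 ih =>
    obtain ⟨r, hr, rfl, hlt⟩ := h2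
    rcases ih with rfl | ih
    · exact Or.inr hlt
    · exact Or.inr (ih.trans hlt)

theorem ble_antisymm {u w : G} (h : genBruhatLE Gen u w) (h' : genBruhatLE Gen w u) : u = w := by
  rcases ble_eq_or_lt h with h | h
  · exact h
  rcases ble_eq_or_lt h' with h' | h'
  · exact h'.symm
  · omega

theorem gen_refl {s : G} (hs : s ∈ Gen) : IsGenReflection Gen s :=
  ⟨1, one_mem _, s, hs, by simp⟩

theorem mem_of_gen {s : G} (hs : s ∈ Gen) : s ∈ Subgroup.closure Gen :=
  Subgroup.subset_closure hs

theorem refl_mem {r : G} (hr : IsGenReflection Gen r) : r ∈ Subgroup.closure Gen := by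
  obtain ⟨x, hx, s, hs, rfl⟩ := hr
  exact mul_mem (mul_mem hx (mem_of_gen hs)) (inv_mem hx)

theorem refl_conj {r g : G} (hr : IsGenReflection Gen r) (hg : g ∈ Subgroup.closure Gen) :
    IsGenReflection Gen (g * r * g⁻¹) := by
  obtain ⟨x, hx, s, hs, rfl⟩ := hr
  exact ⟨g * x, mul_mem hg hx, s, hs, by group⟩

theorem refl_conj' {r g : G} (hr : IsGenReflection Gen r) (hg : g ∈ Subgroup.closure Gen) :
    IsGenReflection Gen (g⁻¹ * r * g) := by
  simpa using refl_conj hr (inv_mem hg)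

theorem glen_le {l : List G} (hl : ∀ t ∈ l, t ∈ Gen) : glen Gen l.prod ≤ l.length :=
  Nat.sInf_le ⟨l, hl, rfl, rfl⟩

theorem glen_one : glen Gen (1 : G) = 0 := by
  have := glen_le (Gen := Gen) (l := []) (by simp)
  simpa using this

theorem ble_mem {u w : G} (hu : u ∈ Subgroup.closure Gen) (h : genBruhatLE Gen u w) :
    w ∈ Subgroup.closure Gen := by
  rw [genBruhatLE_iff] at h
  induction h with
  | refl => exact hu
  | tail _ h2 ih =>
    obtain ⟨r, hr, rfl, hlt⟩ := h2
    exact mul_mem ih (refl_mem hr)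

theorem uAct_mem {u t : G} (hu : u ∈ Subgroup.closure Gen) (ht : t ∈ Gen) :
    uAct u t ∈ Subgroup.closure Gen := by
  have ht' := mem_of_gen ht
  unfold uAct
  split_ifs
  · exact mul_mem hu ht'
  · exact mul_mem (mul_mem ht' hu) ht'

theorem inv_eq_of_sq {u : G} (hi : u * u = 1) : u⁻¹ = u := inv_eq_of_mul_eq_one_left hi

theorem eq_one_of_ble_one {u : G} (h : genBruhatLE Gen u 1) :
    u = 1 := by
  rcases ble_eq_or_lt h with h | h
  · exact h
  · rw [glen_one] at h
    omega

namespace RefSys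

variable (H : RefSys Gen η)
include H

theorem inv_gen {s : G} (hs : s ∈ Gen) : s⁻¹ = s :=
  inv_eq_of_mul_eq_one_left (H.sq s hs)

theorem refl_sq {r : G} (hr : IsGenReflection Gen r) : r * r = 1 := by
  obtain ⟨x, hx, s, hs, rfl⟩ := hr
  have := H.sq s hs
  calc x * s * x⁻¹ * (x * s * x⁻¹) = x * (s * s) * x⁻¹ := by group
    _ = 1 := by rw [this]; group

theorem exists_reduced {g : G} (hg : g ∈ Subgroup.closure Gen) :
    ∃ l : List G, (∀ t ∈ l, t ∈ Gen) ∧ l.length = glen Gen g ∧ l.prod = g := by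
  have hne : {k : ℕ | ∃ l : List G, (∀ t ∈ l, t ∈ Gen) ∧ l.length = k ∧ l.prod = g}.Nonempty := by
    rw [← Subgroup.mem_toSubmonoid, Subgroup.closure_toSubmonoid] at hg
    obtain ⟨l, hl, hp⟩ := Submonoid.exists_list_of_mem_closure hg
    refine ⟨l.length, l, ?_, rfl, hp⟩
    intro t ht
    rcases hl t ht with h | h
    · exact h
    · have := H.inv_gen (Set.mem_inv.1 h)
      rw [inv_inv] at this
      rw [this]
      exact Set.mem_inv.1 h
  exact Nat.sInf_mem hne

theorem glen_eq_zero {g : G} (hg : g ∈ Subgroup.closure Gen) (h : glen Gen g = 0) : g = 1 := by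
  obtain ⟨l, hl, hlen, rfl⟩ := H.exists_reduced hg
  rw [h, List.length_eq_zero_iff] at hlen
  simp [hlen]

theorem glen_inv_le {g : G} (hg : g ∈ Subgroup.closure Gen) : glen Gen g⁻¹ ≤ glen Gen g := by
  obtain ⟨l, hl, hlen, rfl⟩ := H.exists_reduced hg
  have h1 : (l.prod)⁻¹ = l.reverse.prod := by
    rw [List.prod_inv_reverse]
    congr 2
    refine (List.map_congr_left (g := id) fun t ht => ?_).trans (List.map_id l)
    exact H.inv_gen (hl t ht)
  rw [h1, ← hlen]
  have := glen_le (Gen := Gen) (l := l.reverse) (by simpa using hl)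
  simpa using this

theorem glen_inv {g : G} (hg : g ∈ Subgroup.closure Gen) : glen Gen g⁻¹ = glen Gen g :=
  le_antisymm (H.glen_inv_le hg) (by simpa using H.glen_inv_le (inv_mem hg))

theorem glen_mul_le {g s : G} (hg : g ∈ Subgroup.closure Gen) (hs : s ∈ Gen) :
    glen Gen (g * s) ≤ glen Gen g + 1 := by
  obtain ⟨l, hl, hlen, rfl⟩ := H.exists_reduced hg
  have := glen_le (Gen := Gen) (l := l ++ [s]) (by
    intro t ht
    rcases List.mem_append.1 ht with h | h
    · exact hl t h
    · simp only [List.mem_singleton] at h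
      exact h ▸ hs)
  simpa [hlen] using this

/-- The cocycle property of the inversion function. -/
theorem cocycle {g h r : G} (hg : g ∈ Subgroup.closure Gen) (hh : h ∈ Subgroup.closure Gen)
    (hr : IsGenReflection Gen r) : η (g * h) r ↔ ¬ (η g (h * r * h⁻¹) ↔ η h r) := by
  obtain ⟨l, hl, -, rfl⟩ := H.exists_reduced hg
  clear hg
  induction l with
  | nil =>
    have := H.one _ (refl_conj hr hh)
    simp only [List.prod_nil, one_mul]
    tauto
  | cons s l ih =>
    have hl' : ∀ t ∈ l, t ∈ Gen := fun t ht => hl t (by simp [ht])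
    have hs : s ∈ Gen := hl s (by simp)
    have hlp : l.prod ∈ Subgroup.closure Gen :=
      list_prod_mem fun t ht => mem_of_gen (hl' t ht)
    have e1 := H.step s hs (l.prod * h) (mul_mem hlp hh) r hr
    have e2 := H.step s hs l.prod hlp _ (refl_conj hr hh)
    have e3 : l.prod * h * r * (l.prod * h)⁻¹ = l.prod * (h * r * h⁻¹) * l.prod⁻¹ := by group
    rw [List.prod_cons, mul_assoc, e1, e2, e3, ih hl']
    by_cases h1 : η l.prod (h * r * h⁻¹) <;> by_cases h2 : η h r <;> simp [h1, h2]

theorem eta_gen {s r : G} (hs : s ∈ Gen) (hr : IsGenReflection Gen r) : η s r ↔ r = s := by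
  have h1 := H.step s hs 1 (one_mem _) r hr
  have h2 := H.one r hr
  simp only [mul_one, one_mul, inv_one] at h1
  tauto

theorem eta_self {r : G} (hr : IsGenReflection Gen r) : η r r := by
  obtain ⟨x, hx, s, hs, rfl⟩ := id hr
  have hsr := gen_refl hs
  have hxi := inv_mem hx
  have e1 := H.cocycle (mul_mem hx (mem_of_gen hs)) hxi hr
  have e2 : x⁻¹ * (x * s * x⁻¹) * x⁻¹⁻¹ = s := by group
  rw [e2] at e1
  have e3 := H.cocycle hx (mem_of_gen hs) hsr
  have e4 : s * s * s⁻¹ = s := by group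
  rw [e4] at e3
  have e5 := H.cocycle hx hxi hr
  rw [e2, mul_inv_cancel] at e5
  have e6 := H.one _ hr
  have e7 := H.eta_gen hs hsr
  tauto

theorem eta_mul_self {g r : G} (hg : g ∈ Subgroup.closure Gen) (hr : IsGenReflection Gen r) :
    η (g * r) r ↔ ¬ η g r := by
  have e1 := H.cocycle hg (refl_mem hr) hr
  have e2 : r * r * r⁻¹ = r := by group
  rw [e2] at e1
  have := H.eta_self hr
  tauto

/-- Strong exchange: an inverted reflection deletes a letter from any word. -/
theorem exchange {l : List G} (hl : ∀ t ∈ l, t ∈ Gen) {r : G} (hr : IsGenReflection Gen r)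
    (h : η l.prod r) :
    ∃ l' : List G, (∀ t ∈ l', t ∈ Gen) ∧ l'.length + 1 = l.length ∧ l'.prod = l.prod * r := by
  induction l with
  | nil => exact absurd h (by simpa using H.one r hr)
  | cons s l ih =>
    have hl' : ∀ t ∈ l, t ∈ Gen := fun t ht => hl t (by simp [ht])
    have hs : s ∈ Gen := hl s (by simp)
    have hlp : l.prod ∈ Subgroup.closure Gen :=
      list_prod_mem fun t ht => mem_of_gen (hl' t ht)
    rw [List.prod_cons, H.step s hs _ hlp r hr] at h
    by_cases h1 : η l.prod r
    · obtain ⟨l1, a, b, c⟩ := ih hl' h1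
      refine ⟨s :: l1, ?_, by simp [b], by simp [c, mul_assoc]⟩
      intro t ht
      rcases List.mem_cons.1 ht with rfl | ht
      · exact hs
      · exact a t ht
    · have h2 : l.prod * r * l.prod⁻¹ = s := by tauto
      refine ⟨l, hl', by simp, ?_⟩
      have h3 := H.refl_sq hr
      rw [List.prod_cons, ← h2]
      calc l.prod = l.prod * (r * r) := by rw [h3, mul_one]
        _ = _ := by group

theorem lt_of_eta {g r : G} (hg : g ∈ Subgroup.closure Gen) (hr : IsGenReflection Gen r)
    (h : η g r) : glen Gen (g * r) < glen Gen g := by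
  obtain ⟨l, hl, hlen, rfl⟩ := H.exists_reduced hg
  obtain ⟨l', a, b, c⟩ := H.exchange hl hr h
  have := glen_le a
  rw [c] at this
  omega

theorem lt_of_not_eta {g r : G} (hg : g ∈ Subgroup.closure Gen) (hr : IsGenReflection Gen r)
    (h : ¬ η g r) : glen Gen g < glen Gen (g * r) := by
  have h1 := H.lt_of_eta (mul_mem hg (refl_mem hr)) hr ((H.eta_mul_self hg hr).2 h)
  rwa [mul_assoc, H.refl_sq hr, mul_one] at h1

theorem not_eta_of_lt {g r : G} (hg : g ∈ Subgroup.closure Gen) (hr : IsGenReflection Gen r)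
    (h : glen Gen g < glen Gen (g * r)) : ¬ η g r := fun h' => by
  have := H.lt_of_eta hg hr h'
  omega

theorem glen_up {g s : G} (hg : g ∈ Subgroup.closure Gen) (hs : s ∈ Gen)
    (h : ¬ η g s) : glen Gen (g * s) = glen Gen g + 1 := by
  have := H.lt_of_not_eta hg (gen_refl hs) h
  have := H.glen_mul_le hg hs
  omega

theorem glen_down {g s : G} (hg : g ∈ Subgroup.closure Gen) (hs : s ∈ Gen)
    (h : η g s) : glen Gen (g * s) + 1 = glen Gen g := by
  have h1 := H.glen_up (mul_mem hg (mem_of_gen hs)) hs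
    (fun h' => (H.eta_mul_self hg (gen_refl hs)).1 h' h)
  rw [mul_assoc, H.sq s hs, mul_one] at h1
  exact h1.symm

theorem step_up {g s : G} (hg : g ∈ Subgroup.closure Gen) (hs : s ∈ Gen)
    (h : ¬ η g s) : BStep Gen g (g * s) :=
  ⟨s, gen_refl hs, rfl, by have := H.glen_up hg hs h; omega⟩

theorem step_down {g s : G} (hg : g ∈ Subgroup.closure Gen) (hs : s ∈ Gen)
    (h : η g s) : BStep Gen (g * s) g :=
  ⟨s, gen_refl hs, by rw [mul_assoc, H.sq s hs, mul_one], by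
    have := H.glen_down hg hs h; omega⟩

theorem ble_inv {u w : G} (hu : u ∈ Subgroup.closure Gen) (h : genBruhatLE Gen u w) :
    genBruhatLE Gen u⁻¹ w⁻¹ := by
  rw [genBruhatLE_iff] at *
  have key : w ∈ Subgroup.closure Gen ∧ Relation.ReflTransGen (BStep Gen) u⁻¹ w⁻¹ := by
    induction h with
    | refl => exact ⟨hu, .refl⟩
    | @tail b c _ h2 ih =>
      obtain ⟨r, hr, rfl, hlt⟩ := h2
      obtain ⟨hb, ih⟩ := ih
      have hbr := mul_mem hb (refl_mem hr)
      refine ⟨hbr, ih.tail ⟨b * r * b⁻¹, refl_conj hr hb, ?_, ?_⟩⟩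
      · have : r⁻¹ = r := inv_eq_of_mul_eq_one_left (H.refl_sq hr)
        rw [mul_inv_rev, this]
        group
      · rwa [H.glen_inv hb, H.glen_inv hbr]
  exact key.2

/-- The square `z, zr, zs, zrs` behind the lifting property: `z < zr` implies `zs < zrs`, except in
the degenerate case `zr = zs`. -/
theorem square {z r s : G} (hz : z ∈ Subgroup.closure Gen) (hr : IsGenReflection Gen r)
    (hs : s ∈ Gen) (hlt : glen Gen z < glen Gen (z * r)) (h2 : z * r ≠ z * s) :
    BStep Gen (z * s) (z * r * s) := by
  have hsr : IsGenReflection Gen (s * r * s) := by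
    have := refl_conj hr (mem_of_gen hs)
    rwa [H.inv_gen hs] at this
  have hss := H.sq s hs
  have e0 : z * s * (s * r * s) = z * r * s := by
    calc z * s * (s * r * s) = z * (s * s) * r * s := by group
      _ = _ := by rw [hss]; group
  have hn : ¬ η (z * s) (s * r * s) := by
    have e1 := H.cocycle hz (mem_of_gen hs) hsr
    have e2 : s * (s * r * s) * s⁻¹ = r := by
      rw [H.inv_gen hs]
      calc s * (s * r * s) * s = (s * s) * r * (s * s) := by group
        _ = r := by rw [hss]; group
    rw [e2] at e1
    have e3 := H.not_eta_of_lt hz hr hlt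
    have e4 := H.eta_gen hs hsr
    have e5 : s * r * s ≠ s := by
      intro h
      apply h2
      have : r = s := by
        calc r = (s * s) * r * (s * s) := by rw [hss]; group
          _ = s * (s * r * s) * s := by group
          _ = s := by rw [h, hss, one_mul]
      rw [this]
    tauto
  have := H.lt_of_not_eta (mul_mem hz (mem_of_gen hs)) hsr hn
  rw [e0] at this
  exact ⟨_, hsr, e0.symm, this⟩

/-- Lifting property, upper half. -/
theorem lift_up {u w s : G} (hu : u ∈ Subgroup.closure Gen) (hs : s ∈ Gen)
    (h : genBruhatLE Gen u w) (hw : η w s) (hus : ¬ η u s) : genBruhatLE Gen (u * s) w := by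
  rw [genBruhatLE_iff] at h
  induction h using Relation.ReflTransGen.head_induction_on with
  | refl => exact absurd hw hus
  | head h1 h2 ih =>
    rename_i z z1
    obtain ⟨r, hr, rfl, hlt⟩ := h1
    have hz1 := mul_mem hu (refl_mem hr)
    by_cases he : z * r = z * s
    · rw [← he]
      exact (genBruhatLE_iff _ _).2 h2
    have hsq := H.square hu hr hs hlt he
    by_cases h3 : η (z * r) s
    · exact ble_trans (ble_trans hsq.le (H.step_down hz1 hs h3).le) ((genBruhatLE_iff _ _).2 h2)
    · exact ble_trans hsq.le (ih hz1 h3)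

/-- Lifting property, lower half. -/
theorem lift_down {u w s : G} (hu : u ∈ Subgroup.closure Gen) (hs : s ∈ Gen)
    (h : genBruhatLE Gen u w) (hw : η w s) (hus : ¬ η u s) : genBruhatLE Gen u (w * s) := by
  rw [genBruhatLE_iff] at h
  induction h with
  | refl => exact absurd hw hus
  | tail h2 h1 ih =>
    rename_i z q
    have h2' := (genBruhatLE_iff _ _).2 h2
    have hz := ble_mem hu h2'
    obtain ⟨r, hr, rfl, hlt⟩ := h1
    by_cases he : z * r = z * s
    · rwa [he, mul_assoc, H.sq s hs, mul_one]
    have hsq := H.square hz hr hs hlt he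
    by_cases h3 : η z s
    · exact ble_trans (ih h3) hsq.le
    · exact ble_trans (ble_trans h2' (H.step_up hz hs h3).le) hsq.le

theorem exists_descent {u : G} (hu : u ∈ Subgroup.closure Gen) (h1 : u ≠ 1) :
    ∃ s ∈ Gen, η u s := by
  obtain ⟨l, hl, hlen, rfl⟩ := H.exists_reduced hu
  rcases List.eq_nil_or_concat l with rfl | ⟨l', s, rfl⟩
  · simp at h1
  have hs : s ∈ Gen := hl s (by simp)
  refine ⟨s, hs, ?_⟩
  by_contra hn
  have e1 := H.glen_up hu hs hn
  have e2 : (l' ++ [s]).prod * s = l'.prod := by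
    simp [mul_assoc, H.sq s hs]
  have e3 := glen_le (Gen := Gen) (l := l') fun t ht => hl t (by simp [ht])
  simp only [List.concat_eq_append, List.length_append, List.length_singleton] at *
  rw [e2] at e1
  omega

theorem one_le {u : G} (hu : u ∈ Subgroup.closure Gen) : genBruhatLE Gen 1 u := by
  generalize hk : glen Gen u = k
  induction k using Nat.strong_induction_on generalizing u with
  | _ k ih =>
    by_cases h1 : u = 1
    · rw [h1]
      exact ble_refl 1
    obtain ⟨s, hs, hd⟩ := H.exists_descent hu h1
    have hlt := H.glen_down hu hs hd
    exact ble_trans (ih _ (by omega) (mul_mem hu (mem_of_gen hs)) rfl) (H.step_down hu hs hd).le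

theorem gen_ne_one {s : G} (hs : s ∈ Gen) : s ≠ 1 := by
  rintro rfl
  exact H.one _ (gen_refl hs) (H.eta_self (gen_refl hs))

theorem descent_le {u s : G} (hu : u ∈ Subgroup.closure Gen) (hs : s ∈ Gen) (h : η u s) :
    genBruhatLE Gen s u := by
  have := H.lift_up (one_mem _) hs (H.one_le hu) h (H.one _ (gen_refl hs))
  simpa using this

/-- A subgroup that contains all generators but `s`, and every reflection inverted by one of
its elements, detects whether `s` lies below an element. -/
theorem le_iff_notMem {s : G} (hs : s ∈ Gen) (P : Subgroup G) (hsP : s ∉ P)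
    (hP : ∀ t ∈ Gen, t ≠ s → t ∈ P)
    (hinv : ∀ g ∈ Subgroup.closure Gen, ∀ r, IsGenReflection Gen r → η g r → g ∈ P → r ∈ P)
    {u : G} (hu : u ∈ Subgroup.closure Gen) : genBruhatLE Gen s u ↔ u ∉ P := by
  constructor
  · intro h
    rw [genBruhatLE_iff] at h
    have key : u ∉ P ∧ u ∈ Subgroup.closure Gen := by
      clear hu
      induction h with
      | refl => exact ⟨hsP, mem_of_gen hs⟩
      | tail _ h2 ih =>
        obtain ⟨r, hr, rfl, hlt⟩ := h2
        obtain ⟨ih, hb⟩ := ih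
        have hm := mul_mem hb (refl_mem hr)
        refine ⟨fun hin => ih ?_, hm⟩
        have h3 := H.not_eta_of_lt hb hr hlt
        have h4 := hinv _ hm r hr ((H.eta_mul_self hb hr).2 h3) hin
        simpa using mul_mem hin (inv_mem h4)
    exact key.1
  · intro h
    by_contra hn
    apply h
    clear h
    generalize hk : glen Gen u = k
    induction k using Nat.strong_induction_on generalizing u with
    | _ k ih =>
      by_cases h1 : u = 1
      · rw [h1]
        exact one_mem P
      obtain ⟨t, ht, hd⟩ := H.exists_descent hu h1
      have hlt := H.glen_down hu ht hd
      have hut := mul_mem hu (mem_of_gen ht)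
      have e1 := ih _ (by omega) hut (fun hh => hn (ble_trans hh (H.step_down hu ht hd).le)) rfl
      have e2 : t ∈ P := hP t ht fun e => hn (e ▸ H.descent_le hu ht hd)
      simpa using mul_mem e1 (inv_mem e2)

/-! ### Lifting for involutions and the Boolean criterion -/

theorem conj_conj {u t : G} (ht : t ∈ Gen) : t * (t * u * t) * t = u := by
  calc t * (t * u * t) * t = (t * t) * u * (t * t) := by group
    _ = u := by rw [H.sq t ht]; group

theorem uAct_sq {u t : G} (hi : u * u = 1) (ht : t ∈ Gen) : uAct u t * uAct u t = 1 := by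
  have h2 := H.sq t ht
  unfold uAct
  split_ifs with h
  · calc u * t * (u * t) = u * (t * u * t) := by group
      _ = 1 := by rw [h, hi]
  · calc t * u * t * (t * u * t) = t * u * (t * t) * u * t := by group
      _ = t * (u * u) * t := by rw [h2]; group
      _ = 1 := by rw [hi, mul_one, h2]

theorem uAct_uAct {u t : G} (ht : t ∈ Gen) : uAct (uAct u t) t = u := by
  have h2 := H.sq t ht
  by_cases h : t * u * t = u
  · have e1 : uAct u t = u * t := if_pos h
    have e2 : t * (u * t) * t = u * t := by rw [← mul_assoc, h]
    rw [e1, uAct, if_pos e2, mul_assoc, h2, mul_one]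
  · have e1 : uAct u t = t * u * t := if_neg h
    have e2 := H.conj_conj (u := u) ht
    rw [e1, uAct, e2, if_neg (fun e => h e.symm)]

theorem uAct_one {t : G} (ht : t ∈ Gen) : uAct 1 t = t := by
  have h2 := H.sq t ht
  simp [uAct, h2]

/-- If `u` does not commute with `t`, left multiplication by `t` does not change
whether `t` is a right descent. -/
theorem eta_left {u t : G} (hu : u ∈ Subgroup.closure Gen) (ht : t ∈ Gen)
    (h : ¬ t * u * t = u) : η (t * u) t ↔ η u t := by
  have e1 := H.step t ht u hu t (gen_refl ht)
  have e2 : u * t * u⁻¹ ≠ t := by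
    intro e
    apply h
    calc t * u * t = (u * t * u⁻¹) * u * t := by rw [e]
      _ = u * (t * t) := by group
      _ = u := by rw [H.sq t ht, mul_one]
  tauto

theorem eta_uAct {u t : G} (hu : u ∈ Subgroup.closure Gen) (ht : t ∈ Gen) :
    η (uAct u t) t ↔ ¬ η u t := by
  unfold uAct
  split_ifs with h
  · exact H.eta_mul_self hu (gen_refl ht)
  · rw [H.eta_mul_self (mul_mem (mem_of_gen ht) hu) (gen_refl ht), H.eta_left hu ht h]

theorem le_uAct {u t : G} (hu : u ∈ Subgroup.closure Gen) (hi : u * u = 1) (ht : t ∈ Gen)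
    (h : ¬ η u t) : genBruhatLE Gen u (uAct u t) := by
  have ht' := mem_of_gen ht
  have e1 := (H.step_up hu ht h).le
  by_cases hc : t * u * t = u
  · rwa [show uAct u t = u * t from if_pos hc]
  · rw [show uAct u t = t * u * t from if_neg hc]
    refine ble_trans e1 ?_
    have htu := mul_mem ht' hu
    have e2 := (H.step_up htu ht (fun h' => h ((H.eta_left hu ht hc).1 h'))).le
    have e3 := H.ble_inv htu e2
    rwa [mul_inv_rev, mul_inv_rev, mul_inv_rev, H.inv_gen ht, inv_eq_of_sq hi,
      ← mul_assoc] at e3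

theorem uAct_le {u t : G} (hu : u ∈ Subgroup.closure Gen) (hi : u * u = 1) (ht : t ∈ Gen)
    (h : η u t) : genBruhatLE Gen (uAct u t) u := by
  have := H.le_uAct (uAct_mem hu ht) (H.uAct_sq hi ht) ht
    (fun h' => (H.eta_uAct hu ht).1 h' h)
  rwa [H.uAct_uAct ht] at this

/-- Lifting property for involutions, lower half. -/
theorem ilift_down {u w t : G} (hu : u ∈ Subgroup.closure Gen) (hui : u * u = 1)
    (hwi : w * w = 1) (ht : t ∈ Gen) (h : genBruhatLE Gen u w) (hw : η w t) (hut : ¬ η u t) :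
    genBruhatLE Gen u (uAct w t) := by
  have hwm := ble_mem hu h
  have e1 := H.lift_down hu ht h hw hut
  by_cases hc : t * w * t = w
  · rwa [show uAct w t = w * t from if_pos hc]
  · rw [show uAct w t = t * w * t from if_neg hc]
    have e2 := H.ble_inv hu e1
    rw [mul_inv_rev, H.inv_gen ht, inv_eq_of_sq hwi, inv_eq_of_sq hui] at e2
    exact H.lift_down hu ht e2 ((H.eta_left hwm ht hc).2 hw) hut

/-- Lifting property for involutions, upper half. -/
theorem ilift_up {u w t : G} (hu : u ∈ Subgroup.closure Gen) (hui : u * u = 1)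
    (hwi : w * w = 1) (ht : t ∈ Gen) (h : genBruhatLE Gen u w) (hw : η w t) (hut : ¬ η u t) :
    genBruhatLE Gen (uAct u t) w := by
  have e1 := H.lift_up hu ht h hw hut
  by_cases hc : t * u * t = u
  · rwa [show uAct u t = u * t from if_pos hc]
  · rw [show uAct u t = t * u * t from if_neg hc]
    have e2 := H.ble_inv (mul_mem hu (mem_of_gen ht)) e1
    rw [mul_inv_rev, H.inv_gen ht, inv_eq_of_sq hwi, inv_eq_of_sq hui] at e2
    exact H.lift_up (mul_mem (mem_of_gen ht) hu) ht e2 hw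
      (fun h' => hut ((H.eta_left hu ht hc).1 h'))

theorem ilift_both {u w t : G} (hu : u ∈ Subgroup.closure Gen) (hui : u * u = 1)
    (hwi : w * w = 1) (ht : t ∈ Gen) (h : genBruhatLE Gen u w) (hw : η w t) (hut : η u t) :
    genBruhatLE Gen (uAct u t) (uAct w t) :=
  H.ilift_down (uAct_mem hu ht) (H.uAct_sq hui ht) hwi ht
    (ble_trans (H.uAct_le hu hui ht hut) h) hw (fun h' => (H.eta_uAct hu ht).1 h' hut)

theorem gen_le_uAct_iff {w t s : G} (hwm : w ∈ Subgroup.closure Gen) (hwi : w * w = 1)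
    (ht : t ∈ Gen) (hw : η w t) (hs : s ∈ Gen) (hst : s ≠ t) :
    genBruhatLE Gen s (uAct w t) ↔ genBruhatLE Gen s w := by
  refine ⟨fun h => ble_trans h (H.uAct_le hwm hwi ht hw), fun h => ?_⟩
  exact H.ilift_down (mem_of_gen hs) (H.sq s hs) hwi ht h hw
    (fun h' => hst.symm ((H.eta_gen hs (gen_refl ht)).1 h'))

theorem le_gen {u s : G} (hu : u ∈ Subgroup.closure Gen) (hs : s ∈ Gen)
    (h : genBruhatLE Gen u s) : u = 1 ∨ u = s := by
  rcases ble_eq_or_lt h with h | h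
  · exact Or.inr h
  · left
    have := H.glen_mul_le (one_mem _) hs
    rw [one_mul, glen_one] at this
    exact H.glen_eq_zero hu (by omega)

end RefSys

/-- The support of `u`: the simple generators below `u` in the Bruhat order. -/
def supp (Gen : Set G) (u : G) : Set G := {s | s ∈ Gen ∧ genBruhatLE Gen s u}

/-- The involutions of the group that lie below `w`. -/
def InvIdeal (Gen : Set G) (w : G) : Set G :=
  {u | u ∈ Subgroup.closure Gen ∧ u * u = 1 ∧ genBruhatLE Gen u w}

/-- The explicit form of the Boolean property: taking supports is an isomorphism from the ideal
of `w` onto the lattice of subsets of the finite set `supp w`. -/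
structure SuppBoolean (Gen : Set G) (w : G) : Prop where
  fin : (supp Gen w).Finite
  mono : ∀ u ∈ InvIdeal Gen w, ∀ v ∈ InvIdeal Gen w, supp Gen u ⊆ supp Gen v →
    genBruhatLE Gen u v
  surj : ∀ S ⊆ supp Gen w, ∃ u ∈ InvIdeal Gen w, supp Gen u = S

theorem supp_mono {u v : G} (h : genBruhatLE Gen u v) : supp Gen u ⊆ supp Gen v :=
  fun _ hs => ⟨hs.1, ble_trans hs.2 h⟩

namespace RefSys

variable (H : RefSys Gen η)
include H

theorem gen_mem_ideal {w s : G} (hs : s ∈ supp Gen w) : s ∈ InvIdeal Gen w :=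
  ⟨mem_of_gen hs.1, H.sq s hs.1, hs.2⟩

/-- Any isomorphism onto a Boolean lattice identifies the simple generators below `w`, which are
the atoms of the ideal, with the singletons, and so is given by supports. -/
theorem suppBoolean_iff {w : G} (hw : w ∈ Subgroup.closure Gen) :
    genBoolean Gen w ↔ SuppBoolean Gen w := by
  constructor
  · rintro ⟨m, f, hf⟩
    have h1 : (1 : G) ∈ InvIdeal Gen w := ⟨one_mem _, one_mul 1, H.one_le hw⟩
    have f1 : f ⟨1, h1⟩ = ∅ := by
      have := (hf ⟨1, h1⟩ (f.symm ∅)).1 (H.one_le (f.symm ∅).2.1)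
      simpa using this
    have hmono : ∀ u ∈ InvIdeal Gen w, ∀ v ∈ InvIdeal Gen w, supp Gen u ⊆ supp Gen v →
        genBruhatLE Gen u v := by
      intro u hu v hv huv
      refine (hf ⟨u, hu⟩ ⟨v, hv⟩).2 fun x hx => ?_
      obtain ⟨a, ha⟩ := f.surjective {x}
      have ha1 : a.1 ≠ 1 := by
        intro e
        have : a = ⟨1, h1⟩ := Subtype.ext e
        rw [this, f1] at ha
        exact absurd ha.symm (Finset.singleton_ne_empty x)
      obtain ⟨s, hs, hd⟩ := H.exists_descent a.2.1 ha1
      have hsa := H.descent_le a.2.1 hs hd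
      have hsI : s ∈ InvIdeal Gen w := H.gen_mem_ideal ⟨hs, ble_trans hsa a.2.2.2⟩
      have e1 := (hf ⟨s, hsI⟩ a).1 hsa
      rw [ha, Finset.subset_singleton_iff] at e1
      rcases e1 with e1 | e1
      · exact absurd (congrArg Subtype.val (f.injective (e1.trans f1.symm))) (H.gen_ne_one hs)
      · have hau : genBruhatLE Gen a.1 u :=
          (hf a ⟨u, hu⟩).2 (by rw [ha]; simpa using hx)
        have e2 := (huv ⟨hs, ble_trans hsa hau⟩).2
        have e3 := (hf ⟨s, hsI⟩ ⟨v, hv⟩).1 e2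
        rw [e1] at e3
        simpa using e3
    have hfin : (InvIdeal Gen w).Finite := by
      have : Finite {u : G // u ∈ Subgroup.closure Gen ∧ u * u = 1 ∧ genBruhatLE Gen u w} :=
        Finite.of_equiv _ f.symm
      exact Set.finite_coe_iff.1 this
    refine ⟨hfin.subset fun s hs => H.gen_mem_ideal hs, hmono, ?_⟩
    intro S hS
    -- The preimage of the union of the sets `f s`, `s ∈ S`, has support `S`.
    let A : Finset (Fin m) := Finset.univ.filter fun x => ∃ s, ∃ hs : s ∈ S,
      x ∈ f ⟨s, H.gen_mem_ideal (hS hs)⟩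
    obtain ⟨a, ha⟩ := f.surjective A
    refine ⟨a.1, a.2, ?_⟩
    ext s
    constructor
    · rintro ⟨hs, hsa⟩
      have hsI : s ∈ InvIdeal Gen w := H.gen_mem_ideal ⟨hs, ble_trans hsa a.2.2.2⟩
      have hne : (f ⟨s, hsI⟩).Nonempty := by
        rw [Finset.nonempty_iff_ne_empty]
        intro e
        exact H.gen_ne_one hs (congrArg Subtype.val (f.injective (e.trans f1.symm)))
      obtain ⟨x, hx⟩ := hne
      have hxA := (hf ⟨s, hsI⟩ a).1 hsa hx
      rw [ha] at hxA
      obtain ⟨s', hs', hx'⟩ := (Finset.mem_filter.1 hxA).2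
      obtain ⟨b, hb⟩ := f.surjective {x}
      have b1 : b.1 ≠ 1 := by
        intro e
        have : b = ⟨1, h1⟩ := Subtype.ext e
        rw [this, f1] at hb
        exact absurd hb.symm (Finset.singleton_ne_empty x)
      have l1 : genBruhatLE Gen b.1 s := (hf b ⟨s, hsI⟩).2 (by rw [hb]; simpa using hx)
      have l2 : genBruhatLE Gen b.1 s' :=
        (hf b ⟨s', H.gen_mem_ideal (hS hs')⟩).2 (by rw [hb]; simpa using hx')
      have k1 := (H.le_gen b.2.1 hs l1).resolve_left b1
      have k2 := (H.le_gen b.2.1 (hS hs').1 l2).resolve_left b1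
      rwa [← k1, k2]
    · intro hs
      refine ⟨(hS hs).1, (hf ⟨s, H.gen_mem_ideal (hS hs)⟩ a).2 ?_⟩
      rw [ha]
      intro x hx
      exact Finset.mem_filter.2 ⟨Finset.mem_univ _, s, hs, hx⟩
  · rintro ⟨hfin, hmono, hsurj⟩
    have : Finite (supp Gen w) := hfin
    obtain ⟨m, ⟨e⟩⟩ := Finite.exists_equiv_fin (supp Gen w)
    let F : InvIdeal Gen w → Finset (Fin m) := fun u =>
      Finset.univ.filter fun i => genBruhatLE Gen (e.symm i).1 u.1
    have hF : ∀ a b : InvIdeal Gen w, genBruhatLE Gen a.1 b.1 ↔ F a ⊆ F b := by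
      intro a b
      constructor
      · intro h i hi
        exact Finset.mem_filter.2 ⟨Finset.mem_univ _, ble_trans (Finset.mem_filter.1 hi).2 h⟩
      · intro h
        refine hmono a.1 a.2 b.1 b.2 fun s hs => ⟨hs.1, ?_⟩
        have := @h (e ⟨s, hs.1, ble_trans hs.2 a.2.2.2⟩)
          (Finset.mem_filter.2 ⟨Finset.mem_univ _, by simpa using hs.2⟩)
        simpa using (Finset.mem_filter.1 this).2
    have hinj : Function.Injective F := fun a b h =>
      Subtype.ext (ble_antisymm ((hF a b).2 h.le) ((hF b a).2 h.ge))
    have hsur : Function.Surjective F := by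
      intro A
      obtain ⟨u, hu, hS⟩ := hsurj {s | ∃ i ∈ A, (e.symm i).1 = s} (by
        rintro s ⟨i, -, rfl⟩
        exact (e.symm i).2)
      refine ⟨⟨u, hu⟩, ?_⟩
      ext i
      have h1 : genBruhatLE Gen (e.symm i).1 u ↔ (e.symm i).1 ∈ supp Gen u :=
        ⟨fun h => ⟨(e.symm i).2.1, h⟩, fun h => h.2⟩
      simp only [F, Finset.mem_filter, Finset.mem_univ, true_and]
      rw [h1, hS]
      constructor
      · rintro ⟨j, hj, hji⟩
        rwa [← e.symm.injective (Subtype.ext hji)]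
      · intro hi
        exact ⟨i, hi, rfl⟩
    exact ⟨m, Equiv.ofBijective F ⟨hinj, hsur⟩, hF⟩

theorem genBoolean_one : genBoolean Gen (1 : G) := by
  rw [H.suppBoolean_iff (one_mem _)]
  have hs : supp Gen (1 : G) = ∅ := by
    ext s
    simp only [Set.mem_empty_iff_false, iff_false]
    rintro ⟨hs, h⟩
    exact H.gen_ne_one hs (eq_one_of_ble_one h)
  refine ⟨by rw [hs]; exact Set.finite_empty, ?_, ?_⟩
  · intro u hu v hv _
    rw [eq_one_of_ble_one hu.2.2]
    exact H.one_le hv.1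
  · intro S hS
    refine ⟨1, ⟨one_mem _, one_mul 1, ble_refl 1⟩, ?_⟩
    rw [hs] at hS ⊢
    exact (Set.subset_empty_iff.1 hS).symm

/-- The recursive criterion for Boolean involutions: for any descent `t` of `w`, the involution
`w` is Boolean iff the involution `uAct w t`, obtained by removing `t`, is Boolean and does not
lie above `t`. -/
theorem genBoolean_iff_uAct {w t : G} (hwm : w ∈ Subgroup.closure Gen) (hwi : w * w = 1)
    (ht : t ∈ Gen) (hwt : η w t) :
    genBoolean Gen w ↔ genBoolean Gen (uAct w t) ∧ ¬ genBruhatLE Gen t (uAct w t) := by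
  have hm' := uAct_mem hwm ht
  have hle := H.uAct_le hwm hwi ht hwt
  have hwI : w ∈ InvIdeal Gen w := ⟨hwm, hwi, ble_refl w⟩
  have hwI' : uAct w t ∈ InvIdeal Gen w := ⟨hm', H.uAct_sq hwi ht, hle⟩
  rw [H.suppBoolean_iff hwm, H.suppBoolean_iff hm']
  have hsupp : ∀ u ∈ Subgroup.closure Gen, u * u = 1 → η u t →
      supp Gen u = insert t (supp Gen (uAct u t)) := by
    intro u hum hui hut
    ext s
    rw [Set.mem_insert_iff]
    by_cases hst : s = t
    · subst hst
      exact ⟨fun _ => Or.inl rfl, fun _ => ⟨ht, H.descent_le hum ht hut⟩⟩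
    · constructor
      · rintro ⟨a, b⟩
        exact Or.inr ⟨a, (H.gen_le_uAct_iff hum hui ht hut a hst).2 b⟩
      · rintro (h | ⟨a, b⟩)
        · exact absurd h hst
        · exact ⟨a, (H.gen_le_uAct_iff hum hui ht hut a hst).1 b⟩
  constructor
  · rintro ⟨hfin, hmono, hsurj⟩
    refine ⟨⟨hfin.subset (supp_mono hle), ?_, ?_⟩, ?_⟩
    · intro u hu v hv
      exact hmono u ⟨hu.1, hu.2.1, ble_trans hu.2.2 hle⟩ v ⟨hv.1, hv.2.1, ble_trans hv.2.2 hle⟩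
    · intro S hS
      obtain ⟨u, hu, rfl⟩ := hsurj S (hS.trans (supp_mono hle))
      exact ⟨u, ⟨hu.1, hu.2.1, hmono u hu _ hwI' hS⟩, rfl⟩
    · intro htw
      have h1 : supp Gen w ⊆ supp Gen (uAct w t) := by
        rw [hsupp w hwm hwi hwt]
        exact Set.insert_subset ⟨ht, htw⟩ subset_rfl
      have h2 := ble_antisymm (hmono w hwI _ hwI' h1) hle
      have h3 := H.eta_uAct hwm ht
      rw [← h2] at h3
      exact h3.1 hwt hwt
  · rintro ⟨⟨hfin, hmono, hsurj⟩, hnt⟩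
    have hdown : ∀ u ∈ InvIdeal Gen w, ¬ η u t → u ∈ InvIdeal Gen (uAct w t) := fun u hu hut =>
      ⟨hu.1, hu.2.1, H.ilift_down hu.1 hu.2.1 hwi ht hu.2.2 hwt hut⟩
    have hdown' : ∀ u ∈ InvIdeal Gen w, η u t → uAct u t ∈ InvIdeal Gen (uAct w t) :=
      fun u hu hut => ⟨uAct_mem hu.1 ht, H.uAct_sq hu.2.1 ht,
        H.ilift_both hu.1 hu.2.1 hwi ht hu.2.2 hwt hut⟩
    have hts : ∀ u ∈ InvIdeal Gen (uAct w t), t ∉ supp Gen u := fun u hu h =>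
      hnt (ble_trans h.2 hu.2.2)
    have hnd : ∀ u ∈ InvIdeal Gen (uAct w t), ¬ η u t := fun u hu h =>
      hts u hu ⟨ht, H.descent_le hu.1 ht h⟩
    refine ⟨?_, ?_, ?_⟩
    · rw [hsupp w hwm hwi hwt]
      exact hfin.insert t
    · intro u hu v hv huv
      by_cases hut : η u t
      · have hvt : η v t := by
          by_contra h
          exact hts v (hdown v hv h) (huv ⟨ht, H.descent_le hu.1 ht hut⟩)
        have hu' := hdown' u hu hut
        have hv' := hdown' v hv hvt
        have h1 : supp Gen (uAct u t) ⊆ supp Gen (uAct v t) := by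
          intro s hs
          have hsv := huv (supp_mono (H.uAct_le hu.1 hu.2.1 ht hut) hs)
          rw [hsupp v hv.1 hv.2.1 hvt] at hsv
          rcases hsv with rfl | hsv
          · exact absurd hs (hts _ hu')
          · exact hsv
        have h2 := ble_trans (hmono _ hu' _ hv' h1) (H.uAct_le hv.1 hv.2.1 ht hvt)
        have h3 := H.ilift_up hu'.1 hu'.2.1 hv.2.1 ht h2 hvt (hnd _ hu')
        rwa [H.uAct_uAct ht] at h3
      · have hu' := hdown u hu hut
        by_cases hvt : η v t
        · have hv' := hdown' v hv hvt
          refine ble_trans (hmono u hu' _ hv' fun s hs => ?_) (H.uAct_le hv.1 hv.2.1 ht hvt)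
          have hsv := huv hs
          rw [hsupp v hv.1 hv.2.1 hvt] at hsv
          rcases hsv with rfl | hsv
          · exact absurd hs (hts _ hu')
          · exact hsv
        · exact hmono u hu' v (hdown v hv hvt) huv
    · intro S hS
      rw [hsupp w hwm hwi hwt] at hS
      obtain ⟨u, hu, huS⟩ := hsurj (S \ {t}) (by
        rintro s ⟨hs, hst⟩
        exact (hS hs).resolve_left hst)
      by_cases htS : t ∈ S
      · have hm := uAct_mem hu.1 ht
        have hi := H.uAct_sq hu.2.1 ht
        refine ⟨uAct u t, ⟨hm, hi, H.ilift_up hu.1 hu.2.1 hwi ht (ble_trans hu.2.2 hle) hwt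
          (hnd u hu)⟩, ?_⟩
        rw [hsupp _ hm hi ((H.eta_uAct hu.1 ht).2 (hnd u hu)), H.uAct_uAct ht, huS,
          Set.insert_sdiff_singleton, Set.insert_eq_of_mem htS]
      · refine ⟨u, ⟨hu.1, hu.2.1, ble_trans hu.2.2 hle⟩, ?_⟩
        rw [huS, Set.sdiff_singleton_eq_self htS]

end RefSys

end Generic

/-! ### Permutations of the integers: the symmetric and the signed group -/

theorem perm_apply_inv (g : Equiv.Perm ℤ) (x : ℤ) : g (g⁻¹ x) = x := g.apply_symm_apply x

theorem perm_inv_apply (g : Equiv.Perm ℤ) (x : ℤ) : g⁻¹ (g x) = x := g.symm_apply_apply x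

/-- The inversion function of permutations of `ℤ`: the reflection `r` exchanges some `a < r a`
whose order is reversed by `g`. -/
def inverts (g r : Equiv.Perm ℤ) : Prop := ∃ a, a < r a ∧ g (r a) < g a

/-- Permutations preserving the initial segment `{x | x ≤ k}`. -/
def cutSubgroup (k : ℤ) : Subgroup (Equiv.Perm ℤ) where
  carrier := {g | ∀ x, g x ≤ k ↔ x ≤ k}
  one_mem' := fun x => Iff.rfl
  mul_mem' := by
    intro a b ha hb x
    rw [Equiv.Perm.mul_apply, ha, hb]
  inv_mem' := by
    intro a ha x
    have := ha (a⁻¹ x)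
    rw [perm_apply_inv] at this
    exact this.symm

theorem mem_cutSubgroup {k : ℤ} {g : Equiv.Perm ℤ} :
    g ∈ cutSubgroup k ↔ ∀ x, g x ≤ k ↔ x ≤ k := Iff.rfl

/-- The concrete facts on a generating set of permutations of `ℤ` that make `inverts` an
inversion function: the group fixes `0`, all pairs exchanged by a reflection are inverted
simultaneously, a reflection is determined by one exchanged pair, and a generator only reverses
the order of the pairs that it exchanges. -/
structure PermSys (Gen : Set (Equiv.Perm ℤ)) : Prop where
  sq : ∀ s ∈ Gen, s * s = 1
  zero : ∀ s ∈ Gen, s 0 = 0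
  moves : ∀ s ∈ Gen, ∃ x, s x ≠ x
  coherent : ∀ r, IsGenReflection Gen r → ∀ g ∈ Subgroup.closure Gen, ∀ a b, a < r a → b < r b →
    (g (r a) < g a ↔ g (r b) < g b)
  det : ∀ r r', IsGenReflection Gen r → IsGenReflection Gen r' → ∀ x, r x = r' x → r x ≠ x →
    r = r'
  order : ∀ s ∈ Gen, ∀ x y, x ≠ 0 → y ≠ 0 → x ≠ y → (s x < s y ↔ ¬ (x < y ↔ s x = y))

namespace PermSys

variable {Gen : Set (Equiv.Perm ℤ)} (H : PermSys Gen)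
include H

theorem fix_zero {g : Equiv.Perm ℤ} (hg : g ∈ Subgroup.closure Gen) : g 0 = 0 := by
  induction hg using Subgroup.closure_induction with
  | mem s hs => exact H.zero s hs
  | one => rfl
  | mul a b _ _ ha hb => rw [Equiv.Perm.mul_apply, hb, ha]
  | inv a _ ha => rw [Equiv.Perm.inv_eq_iff_eq, ha]

theorem invol {r : Equiv.Perm ℤ} (hr : IsGenReflection Gen r) (x : ℤ) : r (r x) = x := by
  obtain ⟨g, hg, s, hs, rfl⟩ := hr
  have : g * s * g⁻¹ * (g * s * g⁻¹) = 1 := by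
    calc g * s * g⁻¹ * (g * s * g⁻¹) = g * (s * s) * g⁻¹ := by group
      _ = 1 := by rw [H.sq s hs]; group
  exact congrArg (fun f : Equiv.Perm ℤ => f x) this

theorem exists_lt {r : Equiv.Perm ℤ} (hr : IsGenReflection Gen r) : ∃ a, a < r a := by
  have h2 := H.invol hr
  obtain ⟨g, hg, s, hs, rfl⟩ := id hr
  obtain ⟨x, hx⟩ := H.moves s hs
  have h1 : (g * s * g⁻¹) (g x) ≠ g x := by
    simpa using hx
  rcases lt_or_gt_of_ne h1 with h | h
  · exact ⟨_, by rw [h2]; exact h⟩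
  · exact ⟨_, h⟩

theorem inverts_iff {g r : Equiv.Perm ℤ} (hg : g ∈ Subgroup.closure Gen)
    (hr : IsGenReflection Gen r) {a : ℤ} (ha : a < r a) : inverts g r ↔ g (r a) < g a :=
  ⟨fun ⟨b, hb, h⟩ => (H.coherent r hr g hg a b ha hb).2 h, fun h => ⟨a, ha, h⟩⟩

theorem refSys : RefSys Gen inverts where
  sq := H.sq
  one := by
    rintro r hr ⟨a, h1, h2⟩
    simp only [Equiv.Perm.one_apply] at h2
    omega
  step := by
    intro s hs g hg r hr
    obtain ⟨a, ha⟩ := H.exists_lt hr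
    have hsg := mul_mem (mem_of_gen hs) hg
    rw [H.inverts_iff hsg hr ha, H.inverts_iff hg hr ha, Equiv.Perm.mul_apply,
      Equiv.Perm.mul_apply]
    have ha0 : a ≠ 0 := by
      rintro rfl
      rw [H.fix_zero (refl_mem hr)] at ha
      omega
    have hra0 : r a ≠ 0 := by
      intro h
      have := r.injective (h.trans (H.fix_zero (refl_mem hr)).symm)
      exact ha0 this
    have hne : g (r a) ≠ g a := fun h => by
      have := g.injective h
      omega
    have hz : ∀ x, x ≠ 0 → g x ≠ 0 := fun x hx h =>
      hx (g.injective (h.trans (H.fix_zero hg).symm))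
    rw [H.order s hs _ _ (hz _ hra0) (hz _ ha0) hne]
    have key : s (g (r a)) = g a ↔ g * r * g⁻¹ = s := by
      constructor
      · intro h
        refine H.det _ _ (refl_conj hr hg) (gen_refl hs) (g (r a)) ?_ ?_
        · simp [h, H.invol hr]
        · simpa [H.invol hr] using hne.symm
      · rintro rfl
        simp [H.invol hr]
    rw [key]

/-- An element of the group preserving an initial segment inverts only reflections that preserve
it too. -/
theorem cut_refl {k : ℤ} {g r : Equiv.Perm ℤ} (hg : g ∈ Subgroup.closure Gen)
    (hr : IsGenReflection Gen r) (h : inverts g r) (hk : g ∈ cutSubgroup k) :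
    r ∈ cutSubgroup k := by
  have h2 := H.invol hr
  have key : ∀ x, x < r x → (r x ≤ k ↔ x ≤ k) := by
    intro x hx
    have h1 := (H.inverts_iff hg hr hx).1 h
    have e1 := hk x
    have e2 := hk (r x)
    omega
  intro x
  rcases lt_trichotomy x (r x) with hx | hx | hx
  · exact key x hx
  · rw [← hx]
  · have := key (r x) (by rwa [h2])
    rw [h2] at this
    exact this.symm

theorem le_iff_cut {s : Equiv.Perm ℤ} (hs : s ∈ Gen) {k : ℤ} (hk : s ∉ cutSubgroup k)
    (ho : ∀ t ∈ Gen, t ≠ s → t ∈ cutSubgroup k) {u : Equiv.Perm ℤ}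
    (hu : u ∈ Subgroup.closure Gen) : genBruhatLE Gen s u ↔ u ∉ cutSubgroup k :=
  H.refSys.le_iff_notMem hs (cutSubgroup k) hk ho
    (fun _ hg _ hr h hgk => H.cut_refl hg hr h hgk) hu

end PermSys

theorem s0_apply (x : ℤ) : s0 x = if x = 1 then -1 else if x = -1 then 1 else x := by
  simp [s0, Equiv.swap_apply_def]

theorem sPos_apply (i : ℕ) (x : ℤ) :
    sPos i x = if x = i then (i : ℤ) + 1 else if x = i + 1 then (i : ℤ) else x := by
  simp [sPos, Equiv.swap_apply_def]

theorem sNeg_apply (i : ℕ) (x : ℤ) :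
    sNeg i x = if x = -i then -(i : ℤ) - 1 else if x = -i - 1 then -(i : ℤ) else x := by
  simp [sNeg, Equiv.swap_apply_def]

theorem sB_zero : sB 0 = s0 := if_pos rfl

theorem sB_pos {i : ℕ} (hi : 1 ≤ i) : sB i = sPos i * sNeg i := if_neg (by omega)

/-- The generators of `S([±n])` are the transpositions of two consecutive nonzero integers. -/
theorem genA_swap {n : ℕ} {s : Equiv.Perm ℤ} (hs : s ∈ GenA n) :
    ∃ p q : ℤ, s = Equiv.swap p q ∧ p < q ∧ p ≠ 0 ∧ q ≠ 0 ∧ ∀ x, x ≠ 0 → x ≤ p ∨ q ≤ x := by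
  rcases hs with rfl | ⟨i, hi, -, rfl | rfl⟩
  · exact ⟨-1, 1, Equiv.swap_comm _ _, by omega, by omega, by omega, by omega⟩
  · exact ⟨i, i + 1, rfl, by omega, by omega, by omega, by omega⟩
  · exact ⟨-i - 1, -i, Equiv.swap_comm _ _, by omega, by omega, by omega, by omega⟩

theorem reflA_swap {n : ℕ} {r : Equiv.Perm ℤ} (hr : IsGenReflection (GenA n) r) :
    ∃ p q : ℤ, r = Equiv.swap p q := by
  obtain ⟨g, -, s, hs, rfl⟩ := hr
  obtain ⟨p, q, rfl, -⟩ := genA_swap hs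
  exact ⟨g p, g q, (Equiv.swap_apply_apply g p q).symm⟩

theorem swap_of_moved {p q x : ℤ} (h : Equiv.swap p q x ≠ x) :
    Equiv.swap p q = Equiv.swap x (Equiv.swap p q x) := by
  by_cases h1 : x = p
  · subst h1
    rw [Equiv.swap_apply_left]
  by_cases h2 : x = q
  · subst h2
    rw [Equiv.swap_apply_right, Equiv.swap_comm]
  · exact absurd (Equiv.swap_apply_of_ne_of_ne h1 h2) h

theorem permSysA (n : ℕ) : PermSys (GenA n) where
  sq := by
    intro s hs
    obtain ⟨p, q, rfl, -⟩ := genA_swap hs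
    exact Equiv.swap_mul_self p q
  zero := by
    intro s hs
    obtain ⟨p, q, rfl, -, hp, hq, -⟩ := genA_swap hs
    exact Equiv.swap_apply_of_ne_of_ne hp.symm hq.symm
  moves := by
    intro s hs
    obtain ⟨p, q, rfl, hpq, -⟩ := genA_swap hs
    exact ⟨p, by rw [Equiv.swap_apply_left]; omega⟩
  coherent := by
    intro r hr g _ a b ha hb
    obtain ⟨p, q, rfl⟩ := reflA_swap hr
    have : a = b := by
      simp only [Equiv.swap_apply_def] at ha hb
      split_ifs at ha hb <;> omega
    rw [this]
  det := by
    intro r r' hr hr' x h1 h2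
    obtain ⟨p, q, rfl⟩ := reflA_swap hr
    obtain ⟨p', q', rfl⟩ := reflA_swap hr'
    have h3 : Equiv.swap p' q' x ≠ x := by rwa [← h1]
    refine (swap_of_moved h2).trans ?_
    rw [h1]
    exact (swap_of_moved h3).symm
  order := by
    intro s hs x y hx hy hxy
    obtain ⟨p, q, rfl, hpq, hp, hq, hn⟩ := genA_swap hs
    have hx' := hn x hx
    have hy' := hn y hy
    simp only [Equiv.swap_apply_def]
    split_ifs <;> omega

/-- `r` is the reflection of the group of signed permutations that exchanges `p` with `q` and
`-p` with `-q`; here `q = -p` is allowed. -/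
def IsSignedSwap (p q : ℤ) (r : Equiv.Perm ℤ) : Prop :=
  p ≠ 0 ∧ q ≠ 0 ∧ p ≠ q ∧
    ∀ x, r x = if x = p then q else if x = q then p else if x = -p then -q
      else if x = -q then -p else x

theorem sB_signedSwap (i : ℕ) :
    ∃ p q : ℤ, IsSignedSwap p q (sB i) ∧ p < q ∧ 1 ≤ q ∧ (p = -q ∨ 1 ≤ p) ∧
      ∀ x, x ≠ 0 → (x ≤ p ∨ q ≤ x) ∧ (x ≤ -q ∨ -p ≤ x) := by
  rcases Nat.eq_zero_or_pos i with rfl | hi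
  · refine ⟨-1, 1, ⟨by omega, by omega, by omega, fun x => ?_⟩, by omega, by omega, by omega,
      by omega⟩
    rw [sB_zero, s0_apply]
    split_ifs <;> omega
  · refine ⟨i, i + 1, ⟨by omega, by omega, by omega, fun x => ?_⟩, by omega, by omega, by omega,
      by omega⟩
    rw [sB_pos hi, Equiv.Perm.mul_apply, sPos_apply, sNeg_apply]
    split_ifs <;> omega

theorem IsSignedSwap.odd {p q : ℤ} {r : Equiv.Perm ℤ} (h : IsSignedSwap p q r) (x : ℤ) :
    r (-x) = - r x := by
  obtain ⟨hp, hq, hpq, h⟩ := h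
  rw [h, h]
  split_ifs <;> omega

theorem odd_of_mem {n : ℕ} {g : Equiv.Perm ℤ} (hg : g ∈ Subgroup.closure (GenB n)) :
    ∀ x, g (-x) = - g x := by
  induction hg using Subgroup.closure_induction with
  | mem s hs =>
    obtain ⟨i, -, rfl⟩ := hs
    obtain ⟨p, q, h, -⟩ := sB_signedSwap i
    exact h.odd
  | one => exact fun x => rfl
  | mul a b _ _ ha hb =>
    intro x
    rw [Equiv.Perm.mul_apply, hb, ha, Equiv.Perm.mul_apply]
  | inv a _ ha =>
    intro x
    rw [Equiv.Perm.inv_eq_iff_eq, ha, perm_apply_inv]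

theorem IsSignedSwap.conj {p q : ℤ} {r g : Equiv.Perm ℤ} (h : IsSignedSwap p q r)
    (hg : ∀ x, g (-x) = - g x) : IsSignedSwap (g p) (g q) (g * r * g⁻¹) := by
  obtain ⟨hp, hq, hpq, h⟩ := h
  have h0 : g 0 = 0 := by
    have := hg 0
    rw [neg_zero] at this
    omega
  refine ⟨fun e => hp (g.injective (e.trans h0.symm)),
    fun e => hq (g.injective (e.trans h0.symm)), fun e => hpq (g.injective e), fun x => ?_⟩
  obtain ⟨y, rfl⟩ := g.surjective x
  rw [← hg, ← hg]
  simp only [Equiv.Perm.mul_apply, perm_inv_apply, h, g.injective.eq_iff]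
  split_ifs <;> rfl

theorem reflB_signedSwap {n : ℕ} {r : Equiv.Perm ℤ} (hr : IsGenReflection (GenB n) r) :
    ∃ p q : ℤ, IsSignedSwap p q r := by
  obtain ⟨g, hg, s, ⟨i, -, rfl⟩, rfl⟩ := hr
  obtain ⟨p, q, h, -⟩ := sB_signedSwap i
  exact ⟨g p, g q, h.conj (odd_of_mem hg)⟩

theorem IsSignedSwap.moved {p q x : ℤ} {r : Equiv.Perm ℤ} (h : IsSignedSwap p q r)
    (hx : r x ≠ x) : IsSignedSwap x (r x) r := by
  obtain ⟨hp, hq, hpq, h⟩ := h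
  have hrx := h x
  refine ⟨?_, ?_, hx.symm, fun y => ?_⟩
  · split_ifs at hrx <;> omega
  · split_ifs at hrx <;> omega
  · rw [h y]
    split_ifs at hrx <;> split_ifs <;> omega

theorem permSysB (n : ℕ) : PermSys (GenB n) where
  sq := by
    rintro s ⟨i, -, rfl⟩
    obtain ⟨p, q, ⟨hp, hq, hpq, h⟩, -⟩ := sB_signedSwap i
    ext x
    rw [Equiv.Perm.mul_apply, Equiv.Perm.one_apply, h (sB i x), h x]
    split_ifs <;> omega
  zero := by
    rintro s ⟨i, -, rfl⟩
    obtain ⟨p, q, ⟨hp, hq, hpq, h⟩, -⟩ := sB_signedSwap i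
    rw [h]
    split_ifs <;> omega
  moves := by
    rintro s ⟨i, -, rfl⟩
    obtain ⟨p, q, ⟨hp, hq, hpq, h⟩, -⟩ := sB_signedSwap i
    exact ⟨p, by rw [h, if_pos rfl]; exact hpq.symm⟩
  coherent := by
    intro r hr g hg a b ha hb
    have hodd := odd_of_mem hg
    obtain ⟨p, q, h⟩ := reflB_signedSwap hr
    have h' := (h.moved ha.ne').2.2.2 b
    have key : b = a ∨ (b = - r a ∧ r b = - a) := by
      split_ifs at h' <;> omega
    rcases key with rfl | ⟨h1, h2⟩
    · rfl
    · rw [h2, h1, hodd, hodd]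
      omega
  det := by
    intro r r' hr hr' x h1 h2
    obtain ⟨p, q, h⟩ := reflB_signedSwap hr
    obtain ⟨p', q', h'⟩ := reflB_signedSwap hr'
    have e1 := (h.moved h2).2.2.2
    have h3 : r' x ≠ x := by rwa [← h1]
    have e2 := (h'.moved h3).2.2.2
    ext y
    rw [e1, e2, h1]
  order := by
    rintro s ⟨i, -, rfl⟩ x y hx hy hxy
    obtain ⟨p, q, ⟨hp, hq, hpq, h⟩, h1, h2, h3, hn⟩ := sB_signedSwap i
    have hx' := hn x hx
    have hy' := hn y hy
    rw [h, h]
    split_ifs <;> omega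

theorem closureB_le (n : ℕ) : Subgroup.closure (GenB n) ≤ Subgroup.closure (GenA n) := by
  rw [Subgroup.closure_le]
  rintro s ⟨i, hi, rfl⟩
  rcases Nat.eq_zero_or_pos i with rfl | h
  · rw [sB_zero]
    exact mem_of_gen (Or.inl rfl)
  · rw [sB_pos h]
    exact mul_mem (mem_of_gen (Or.inr ⟨i, h, hi, Or.inl rfl⟩))
      (mem_of_gen (Or.inr ⟨i, h, hi, Or.inr rfl⟩))

/-- The value `k = -1` is excluded: no integer but `0` lies between the cuts at `-1` and at `0`, so
`s0` does not preserve `{x | x ≤ -1}` either. -/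
theorem s0_cut (k : ℤ) (hk : k = 0 ∨ 1 ≤ k ∨ k ≤ -2) : s0 ∈ cutSubgroup k ↔ k ≠ 0 := by
  rw [mem_cutSubgroup]
  constructor
  · rintro h rfl
    have := h 1
    rw [s0_apply] at this
    simp at this
  · intro h x
    rw [s0_apply]
    split_ifs <;> omega

theorem sPos_cut (i : ℕ) (k : ℤ) : sPos i ∈ cutSubgroup k ↔ k ≠ i := by
  rw [mem_cutSubgroup]
  constructor
  · rintro h rfl
    have := h i
    rw [sPos_apply] at this
    simp at this
  · intro h x
    rw [sPos_apply]
    split_ifs <;> omega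

theorem sNeg_cut (i : ℕ) (k : ℤ) : sNeg i ∈ cutSubgroup k ↔ k ≠ -i - 1 := by
  rw [mem_cutSubgroup]
  constructor
  · rintro h rfl
    have := h (-i)
    rw [sNeg_apply] at this
    simp at this
  · intro h x
    rw [sNeg_apply]
    split_ifs <;> omega

theorem sB_cut (i j : ℕ) : sB j ∈ cutSubgroup i ↔ i ≠ j := by
  obtain rfl | hj := Nat.eq_zero_or_pos j
  · rw [sB_zero, s0_cut _ (by omega)]
    omega
  · rw [sB_pos hj]
    have h1 : sNeg j ∈ cutSubgroup (i : ℤ) := (sNeg_cut j i).2 (by omega)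
    rw [Subgroup.mul_mem_cancel_right _ h1, sPos_cut]
    omega

theorem leB_iff {n i : ℕ} (hi : i + 1 ≤ n) {u : Equiv.Perm ℤ}
    (hu : u ∈ Subgroup.closure (GenB n)) :
    genBruhatLE (GenB n) (sB i) u ↔ u ∉ cutSubgroup i := by
  refine (permSysB n).le_iff_cut ⟨i, hi, rfl⟩ (fun h => (sB_cut i i).1 h rfl) ?_ hu
  rintro t ⟨j, -, rfl⟩ hne
  refine (sB_cut i j).2 ?_
  rintro rfl
  exact hne rfl

theorem le_s0_iff {n : ℕ} {u : Equiv.Perm ℤ} (hu : u ∈ Subgroup.closure (GenA n)) :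
    genBruhatLE (GenA n) s0 u ↔ u ∉ cutSubgroup 0 := by
  refine (permSysA n).le_iff_cut (Or.inl rfl) (fun h => (s0_cut 0 (by omega)).1 h rfl) ?_ hu
  rintro t (rfl | ⟨j, hj, -, rfl | rfl⟩) hne
  · exact absurd rfl hne
  · exact (sPos_cut j 0).2 (by omega)
  · exact (sNeg_cut j 0).2 (by omega)

theorem le_sPos_iff {n i : ℕ} (hi0 : 1 ≤ i) (hi : i + 1 ≤ n) {u : Equiv.Perm ℤ}
    (hu : u ∈ Subgroup.closure (GenA n)) :
    genBruhatLE (GenA n) (sPos i) u ↔ u ∉ cutSubgroup i := by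
  refine (permSysA n).le_iff_cut (Or.inr ⟨i, hi0, hi, Or.inl rfl⟩)
    (fun h => (sPos_cut i i).1 h rfl) ?_ hu
  rintro t (rfl | ⟨j, hj, -, rfl | rfl⟩) hne
  · exact (s0_cut i (by omega)).2 (by omega)
  · refine (sPos_cut j i).2 fun h => hne ?_
    rw [Int.ofNat_inj.1 h]
  · exact (sNeg_cut j i).2 (by omega)

theorem le_sNeg_iff {n i : ℕ} (hi0 : 1 ≤ i) (hi : i + 1 ≤ n) {u : Equiv.Perm ℤ}
    (hu : u ∈ Subgroup.closure (GenA n)) :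
    genBruhatLE (GenA n) (sNeg i) u ↔ u ∉ cutSubgroup (-i - 1) := by
  refine (permSysA n).le_iff_cut (Or.inr ⟨i, hi0, hi, Or.inr rfl⟩)
    (fun h => (sNeg_cut i _).1 h rfl) ?_ hu
  rintro t (rfl | ⟨j, hj, -, rfl | rfl⟩) hne
  · exact (s0_cut _ (by omega)).2 (by omega)
  · exact (sPos_cut j _).2 (by omega)
  · refine (sNeg_cut j _).2 fun h => hne ?_
    rw [show i = j by omega]

theorem cut_odd {u : Equiv.Perm ℤ} (hu : ∀ x, u (-x) = - u x) (i : ℤ) :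
    u ∈ cutSubgroup (-i - 1) ↔ u ∈ cutSubgroup i := by
  rw [mem_cutSubgroup, mem_cutSubgroup]
  constructor
  · intro h x
    have := h (-x)
    rw [hu] at this
    omega
  · intro h x
    have := h (-x)
    rw [hu] at this
    omega

theorem sPos_sNeg_comm {i : ℕ} (hi : 1 ≤ i) : sNeg i * sPos i = sPos i * sNeg i := by
  ext x
  simp only [Equiv.Perm.mul_apply, sPos_apply, sNeg_apply]
  split_ifs <;> omega

theorem sPos_ne_sNeg {i : ℕ} (hi : 1 ≤ i) : sPos i ≠ sNeg i := by
  intro h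
  have := congrArg (fun f : Equiv.Perm ℤ => f i) h
  simp only [sPos_apply, sNeg_apply] at this
  split_ifs at this <;> omega

/-! ### Comparison of the two Boolean properties -/

/-- Removing two commuting descents `s`, `s'` one after the other has the same effect as removing
their product, unless conjugation by `w` exchanges them, in which case removing `s` alone already
removes the product. In both cases, and provided that `uAct w (s * s')` lies above `s` iff it lies
above `s'`, the recursive criterion takes the same form as for a single descent. -/
theorem RefSys.genBoolean_iff_pair {G : Type*} [Group G] {Gen : Set G} {η : G → G → Prop}
    (H : RefSys Gen η) {w s s' : G} (hwm : w ∈ Subgroup.closure Gen) (hwi : w * w = 1)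
    (hs : s ∈ Gen) (hs' : s' ∈ Gen) (hne : s ≠ s') (hcomm : s' * s = s * s')
    (h1 : η w s) (h2 : η w s') (hc : s * w * s = w ↔ s' * w * s' = w)
    (hT : s * s' * w * (s * s') = w → s * w * s = w ∨ w * s * w = s')
    (hle : genBruhatLE Gen s (uAct w (s * s')) ↔ genBruhatLE Gen s' (uAct w (s * s'))) :
    genBoolean Gen w ↔
      genBoolean Gen (uAct w (s * s')) ∧ ¬ genBruhatLE Gen s (uAct w (s * s')) := by
  have q := H.sq s hs
  have q' := H.sq s' hs'
  by_cases hx : w * s * w = s'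
  · have e1 : s' * w = w * s := by rw [← hx, mul_assoc, hwi, mul_one]
    have e2 : w * s' = s * w := by
      rw [← hx]
      calc w * (w * s * w) = w * w * s * w := by group
        _ = s * w := by rw [hwi, one_mul]
    have n1 : s * w * s ≠ w := by
      intro e
      apply hne
      rw [← hx]
      calc s = s * (w * w) := by rw [hwi, mul_one]
        _ = s * w * (s * s) * w := by rw [q]; group
        _ = s * w * s * s * w := by group
        _ = w * s * w := by rw [e]
    have n2 : s * s' * w * (s * s') = w := by
      calc s * s' * w * (s * s') = s * (s' * w) * s * s' := by group
        _ = s * w * (s * s) * s' := by rw [e1]; group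
        _ = s * (w * s') := by rw [q]; group
        _ = s * s * w := by rw [e2]; group
        _ = w := by rw [q, one_mul]
    -- `w` commutes with `s * s'` but not with `s`, and `s * w * s = w * (s * s')`.
    have e3 : uAct w s = uAct w (s * s') := by
      rw [uAct, uAct, if_neg n1, if_pos n2, ← e2, mul_assoc, hcomm]
    rw [← e3]
    exact H.genBoolean_iff_uAct hwm hwi hs h1
  · have hws := mul_mem hwm (mem_of_gen hs)
    have hss : s * s' * s⁻¹ = s' := by rw [← hcomm, mul_assoc, mul_inv_cancel, mul_one]
    have k1 : η (w * s) s' := by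
      have a1 := H.cocycle hwm (mem_of_gen hs) (gen_refl hs')
      rw [hss] at a1
      have a2 := H.eta_gen hs (gen_refl hs')
      have a3 := hne.symm
      tauto
    -- `s'` is still a descent after removing `s`; the two cases are whether `w` commutes with `s`.
    have key : η (uAct w s) s' ∧ uAct (uAct w s) s' = uAct w (s * s') := by
      by_cases hsw : s * w * s = w
      · have hsw' := hc.1 hsw
        have e1 : uAct w s = w * s := if_pos hsw
        have e2 : s' * (w * s) * s' = w * s := by
          calc s' * (w * s) * s' = s' * w * (s * s') := by group
            _ = s' * w * s' * s := by rw [← hcomm]; group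
            _ = w * s := by rw [hsw']
        have e3 : s * s' * w * (s * s') = w := by
          calc s * s' * w * (s * s') = s * s' * w * (s' * s) := by rw [hcomm]
            _ = s * (s' * w * s') * s := by group
            _ = w := by rw [hsw', hsw]
        refine ⟨by rwa [e1], ?_⟩
        rw [e1, uAct, uAct, if_pos e2, if_pos e3, mul_assoc]
      · have e1 : uAct w s = s * w * s := if_neg hsw
        have e2 : s' * (s * w * s) * s' = s * s' * w * (s * s') := by
          calc s' * (s * w * s) * s' = s' * s * w * (s * s') := by group
            _ = _ := by rw [hcomm]
        have e3 : s * s' * w * (s * s') ≠ w := fun e => (hT e).elim hsw hx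
        have e4 : s' * (s * w * s) * s' ≠ s * w * s := by
          intro e
          apply hsw
          apply hc.2
          have : s * (s' * (s * w * s) * s') * s = s * (s * w * s) * s := by rw [e]
          rw [H.conj_conj hs] at this
          refine Eq.trans ?_ this
          calc s' * w * s' = (s * s) * s' * w * s' * (s * s) := by rw [q]; group
            _ = s * (s * s') * w * (s' * s) * s := by group
            _ = s * (s' * s) * w * (s * s') * s := by rw [hcomm]
            _ = _ := by group
        refine ⟨?_, by rw [e1, uAct, uAct, if_neg e4, if_neg e3, e2]⟩
        rw [e1, mul_assoc, H.step s hs (w * s) hws s' (gen_refl hs')]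
        have e5 : w * s * s' * (w * s)⁻¹ ≠ s := by
          intro e
          apply hx
          rw [mul_inv_rev, H.inv_gen hs, inv_eq_of_sq hwi] at e
          have e6 : w * s * s' * (s * w) = w * s' * w := by
            calc w * s * s' * (s * w) = w * (s * s') * s * w := by group
              _ = w * s' * (s * s) * w := by rw [← hcomm]; group
              _ = w * s' * w := by rw [q]; group
          rw [e6] at e
          rw [← e]
          calc w * (w * s' * w) * w = (w * w) * s' * (w * w) := by group
            _ = s' := by rw [hwi]; group
        tauto
    have hm1 := uAct_mem hwm hs
    have hi1 := H.uAct_sq hwi hs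
    have f1 := H.genBoolean_iff_uAct hwm hwi hs h1
    have f2 := H.genBoolean_iff_uAct hm1 hi1 hs' key.1
    have f3 := H.gen_le_uAct_iff hm1 hi1 hs' key.1 hs hne
    rw [key.2] at f2 f3
    tauto

theorem sNeg_eq (i : ℕ) (x : ℤ) : sNeg i x = - sPos i (-x) := by
  rw [sNeg_apply, sPos_apply]
  split_ifs <;> omega

theorem comm_pos_iff_neg {w : Equiv.Perm ℤ} (hodd : ∀ x, w (-x) = - w x) (i : ℕ) :
    sPos i * w * sPos i = w ↔ sNeg i * w * sNeg i = w := by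
  constructor
  · intro h
    ext x
    have := congrArg (fun f : Equiv.Perm ℤ => f (-x)) h
    simp only [Equiv.Perm.mul_apply] at this ⊢
    rw [sNeg_eq, sNeg_eq, hodd, neg_neg, this, hodd, neg_neg]
  · intro h
    ext x
    have := congrArg (fun f : Equiv.Perm ℤ => f (-x)) h
    simp only [Equiv.Perm.mul_apply] at this ⊢
    rw [sNeg_eq, sNeg_eq, hodd, neg_neg, neg_neg, hodd] at this
    exact neg_injective this

/-- If `w` commutes with `sᵢ sᵢ'`, then conjugation by `w` fixes or exchanges `sᵢ` and `sᵢ'`. -/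
theorem fix_or_exchange {w : Equiv.Perm ℤ} (hwi : w * w = 1) {i : ℕ} (hi : 1 ≤ i)
    (h : sPos i * sNeg i * w * (sPos i * sNeg i) = w) :
    sPos i * w * sPos i = w ∨ w * sPos i * w = sNeg i := by
  have hconj : w * sPos i * w = Equiv.swap (w i) (w (i + 1)) := by
    have := (Equiv.swap_apply_apply w (i : ℤ) (i + 1)).symm
    rwa [inv_eq_of_sq hwi] at this
  have ht : ∀ x, (sPos i * sNeg i) x = if x = i then (i : ℤ) + 1 else if x = i + 1 then (i : ℤ)
      else if x = -i then -(i : ℤ) - 1 else if x = -i - 1 then -(i : ℤ) else x := by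
    intro x
    rw [Equiv.Perm.mul_apply, sPos_apply, sNeg_apply]
    split_ifs <;> omega
  have h1 : (sPos i * sNeg i) (w (i + 1)) = w i := by
    have := congrArg (fun f : Equiv.Perm ℤ => f i) h
    simp only [Equiv.Perm.mul_apply _ (sPos i * sNeg i)] at this
    rw [ht i, if_pos rfl] at this
    exact this
  have hne : w (i + 1) ≠ w i := fun e => by
    have := w.injective e
    omega
  rw [ht] at h1
  rw [hconj]
  have key : Equiv.swap (w i) (w (i + 1)) = sPos i ∨ Equiv.swap (w i) (w (i + 1)) = sNeg i := by
    split_ifs at h1 with c1 c2 c3 c4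
    · left; rw [c1, ← h1, Equiv.swap_comm]; rfl
    · left; rw [c2, ← h1]; rfl
    · right; rw [c3, ← h1, Equiv.swap_comm]; rfl
    · right; rw [c4, ← h1]; rfl
    · exact absurd h1 hne
  refine key.imp_left fun k => ?_
  rw [← hconj] at k
  have q : sPos i * sPos i = 1 := Equiv.swap_mul_self _ _
  have k2 : sPos i * w = w * sPos i := by
    calc sPos i * w = w * sPos i * w * w := by rw [k]
      _ = w * sPos i * (w * w) := by group
      _ = w * sPos i := by rw [hwi, mul_one]
  rw [k2, mul_assoc, q, mul_one]

/-- The comparison for involutions of signed length `k`, by induction on `k`. -/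
theorem boolean_iff_aux (n k : ℕ) : ∀ w : Equiv.Perm ℤ, w ∈ Subgroup.closure (GenB n) →
    w * w = 1 → glen (GenB n) w = k → (genBoolean (GenB n) w ↔ genBoolean (GenA n) w) := by
  have hA := (permSysA n).refSys
  have hB := (permSysB n).refSys
  induction k using Nat.strong_induction_on with
  | _ k ih =>
    intro w hwB hwi hk
    by_cases hw1 : w = 1
    · subst hw1
      exact iff_of_true hB.genBoolean_one hA.genBoolean_one
    obtain ⟨t, ht, hwt⟩ := hB.exists_descent hwB hw1
    have hwA := closureB_le n hwB
    have hodd := odd_of_mem hwB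
    have hmB := uAct_mem hwB ht
    have hmA := closureB_le n hmB
    have hi' := hB.uAct_sq hwi ht
    have hlt : glen (GenB n) (uAct w t) < k := by
      rcases ble_eq_or_lt (hB.uAct_le hwB hwi ht hwt) with e | e
      · have := hB.eta_uAct hwB ht
        rw [e] at this
        exact absurd hwt (this.1 hwt)
      · rwa [← hk]
    have IH := ih _ hlt (uAct w t) hmB hi' rfl
    rw [hB.genBoolean_iff_uAct hwB hwi ht hwt, IH]
    obtain ⟨i, hi, rfl⟩ := ht
    have hleB := leB_iff hi hmB
    rcases Nat.eq_zero_or_pos i with rfl | hpos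
    · rw [sB_zero] at *
      have h0 : s0 ∈ GenA n := Or.inl rfl
      have hleA := le_s0_iff hmA
      rw [hA.genBoolean_iff_uAct hwA hwi h0 hwt, hleB, hleA]
      rfl
    · have hsP : sPos i ∈ GenA n := Or.inr ⟨i, hpos, hi, Or.inl rfl⟩
      have hsN : sNeg i ∈ GenA n := Or.inr ⟨i, hpos, hi, Or.inr rfl⟩
      have hBi : sB i i = i + 1 := by
        rw [sB_pos hpos, Equiv.Perm.mul_apply, sNeg_apply, if_neg (by omega), if_neg (by omega),
          sPos_apply, if_pos rfl]
      have hdesc : w (i + 1) < w i := by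
        have := ((permSysB n).inverts_iff hwB (gen_refl ⟨i, hi, rfl⟩)
          (a := (i : ℤ)) (by rw [hBi]; omega)).1 hwt
        rwa [hBi] at this
      -- The descent `sB i` of the odd function `w` yields both `sPos i` and `sNeg i`.
      have d1 : inverts w (sPos i) := by
        refine ⟨i, ?_, ?_⟩ <;> rw [sPos_apply, if_pos rfl]
        · omega
        · exact hdesc
      have d2 : inverts w (sNeg i) := by
        have e : sNeg i (-i - 1) = -i := by
          rw [sNeg_apply, if_neg (by omega), if_pos rfl]
        refine ⟨-i - 1, ?_, ?_⟩ <;> rw [e]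
        · omega
        · rw [hodd, show (-i - 1 : ℤ) = -(i + 1) by ring, hodd]
          omega
      rw [sB_pos hpos] at *
      have l1 := le_sPos_iff hpos hi hmA
      have l2 := le_sNeg_iff hpos hi hmA
      have l3 := cut_odd (odd_of_mem hmB) i
      rw [hA.genBoolean_iff_pair hwA hwi hsP hsN (sPos_ne_sNeg hpos) (sPos_sNeg_comm hpos) d1 d2
        (comm_pos_iff_neg hodd i) (fix_or_exchange hwi hpos) (by rw [l1, l2, l3]), hleB, l1]

/-- An involution `w ∈ I(S^B_n)` is Boolean with respect to the Coxeter system of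
`S^B_n` if and only if its image `φ(w) ∈ I(S([±n]))` under the inclusion map `φ`
is Boolean with respect to the Coxeter system of `S([±n])`. -/
theorem signed_boolean_iff_inclusion_boolean (n : ℕ) (w : Equiv.Perm ℤ)
    (hmem : w ∈ Subgroup.closure (GenB n)) (hinv : w * w = 1) :
    genBoolean (GenB n) w ↔ genBoolean (GenA n) w := by
  exact boolean_iff_aux n _ w hmem hinv rfl
end
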